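/- arXiv:1502.06143 — 2 statements merged into one kernel-verified Lean document; each statement's English description precedes it below -/
import Mathlib

section
/- Let μ_1, μ_2 be Borel probability measures on R^{2d} and μ ∈ Π(μ_1, μ_2) a coupling. Then the Töplitz operator OP_ε^T((2πε)^{2d} μ) on L^2(R^d) ⊗ L^2(R^d) is a density operator whose two partial traces are the Töplitz operators OP_ε^T((2πε)^d μ_1) and OP_ε^T((2πε)^d μ_2) respectively. -/
open MeasureTheory
open scoped ComplexConjugate RealInnerProductSpace

noncomputable section

/-- The coherent state `|z,ε⟩` at scale `ε` with `z = q + ip ∈ ℂ^d`: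
`|z,ε⟩(x) = (πε)^{−d/4} e^{−(x−q)²/2ε} e^{ip·x/ε}`. -/
def coh (d : ℕ) (ε : ℝ) (q p x : EuclideanSpace ℝ (Fin d)) : ℂ :=
  (((Real.pi * ε) ^ (-(d : ℝ) / 4) : ℝ) : ℂ) *
    Complex.exp ((-(‖x - q‖ ^ 2) / (2 * ε) : ℝ) + Complex.I * ((⟪p, x⟫ / ε : ℝ) : ℂ))

/-- The kernel of the Töplitz operator `OP_ε^T((2πε)^{2d} μ)` on
`L²(ℝ^d) ⊗ L²(ℝ^d)` for a measure `μ` on phase-space pairs. -/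
def toeplitzKernel2 (d : ℕ) (ε : ℝ)
    (μ : Measure ((EuclideanSpace ℝ (Fin d) × EuclideanSpace ℝ (Fin d)) ×
                  (EuclideanSpace ℝ (Fin d) × EuclideanSpace ℝ (Fin d))))
    (X Y : EuclideanSpace ℝ (Fin d) × EuclideanSpace ℝ (Fin d)) : ℂ :=
  ∫ z, coh d ε z.1.1 z.1.2 X.1 * coh d ε z.2.1 z.2.2 X.2 *
        conj (coh d ε z.1.1 z.1.2 Y.1) * conj (coh d ε z.2.1 z.2.2 Y.2) ∂μ

/-- The kernel of the Töplitz operator `OP_ε^T((2πε)^d ν)` on `L²(ℝ^d)`. -/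
def toeplitzKernel1 (d : ℕ) (ε : ℝ)
    (ν : Measure (EuclideanSpace ℝ (Fin d) × EuclideanSpace ℝ (Fin d)))
    (x y : EuclideanSpace ℝ (Fin d)) : ℂ :=
  ∫ z, coh d ε z.1 z.2 x * conj (coh d ε z.1 z.2 y) ∂ν

lemma coh_continuous (d : ℕ) (ε : ℝ) {T : Type*} [TopologicalSpace T]
    {q p x : T → EuclideanSpace ℝ (Fin d)} (hq : Continuous q) (hp : Continuous p)
    (hx : Continuous x) : Continuous fun t => coh d ε (q t) (p t) (x t) := by
  unfold coh
  fun_prop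

lemma coh_norm (d : ℕ) (ε : ℝ) (hε : 0 < ε) (q p x : EuclideanSpace ℝ (Fin d)) :
    ‖coh d ε q p x‖ = (Real.pi * ε) ^ (-(d : ℝ) / 4) * Real.exp (-(‖x - q‖ ^ 2) / (2 * ε)) := by
  unfold coh
  have h0 : 0 ≤ (Real.pi * ε) ^ (-(d : ℝ) / 4) := by positivity
  rw [norm_mul, Complex.norm_exp, Complex.norm_real, Real.norm_of_nonneg h0, Complex.add_re,
    Complex.ofReal_re, Complex.re_mul_ofReal]
  simp

lemma coh_norm_le (d : ℕ) (ε : ℝ) (hε : 0 < ε) (q p x : EuclideanSpace ℝ (Fin d)) :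
    ‖coh d ε q p x‖ ≤ (Real.pi * ε) ^ (-(d : ℝ) / 4) := by
  rw [coh_norm d ε hε]
  have h0 : 0 ≤ (Real.pi * ε) ^ (-(d : ℝ) / 4) := by positivity
  refine mul_le_of_le_one_right h0 (Real.exp_le_one_iff.2 ?_)
  apply div_nonpos_of_nonpos_of_nonneg
  · simp
  · positivity

lemma coh_sq (d : ℕ) (ε : ℝ) (hε : 0 < ε) (q p x : EuclideanSpace ℝ (Fin d)) :
    ‖coh d ε q p x‖ ^ 2 = (Real.pi * ε) ^ (-(d : ℝ) / 2) * Real.exp (-(1 / ε) * ‖x - q‖ ^ 2) := by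
  rw [coh_norm d ε hε, mul_pow, ← Real.exp_nat_mul, ← Real.rpow_natCast, ← Real.rpow_mul (by positivity)]
  congr 2
  · push_cast; ring
  · push_cast; field_simp

lemma gauss_int (d : ℕ) (ε : ℝ) (hε : 0 < ε) :
    (∫ x : EuclideanSpace ℝ (Fin d), Real.exp (-(1 / ε) * ‖x‖ ^ 2)) =
      (Real.pi * ε) ^ ((d : ℝ) / 2) := by
  have := GaussianFourier.integral_rexp_neg_mul_sq_norm (V := EuclideanSpace ℝ (Fin d))
    (b := 1 / ε) (by positivity)
  rw [this]
  simp

lemma coh_sq_integral (d : ℕ) (ε : ℝ) (hε : 0 < ε) (q p : EuclideanSpace ℝ (Fin d)) :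
    (∫ x, ‖coh d ε q p x‖ ^ 2) = 1 := by
  simp_rw [coh_sq d ε hε]
  rw [integral_const_mul,
    integral_sub_right_eq_self (fun x : EuclideanSpace ℝ (Fin d) => Real.exp (-(1 / ε) * ‖x‖ ^ 2)) q,
    gauss_int d ε hε, ← Real.rpow_add (by positivity)]
  ring_nf
  simp

lemma coh_sq_integrable (d : ℕ) (ε : ℝ) (hε : 0 < ε) (q p : EuclideanSpace ℝ (Fin d)) :
    Integrable (fun x => ‖coh d ε q p x‖ ^ 2) := by
  by_contra h
  have := coh_sq_integral d ε hε q p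
  rw [integral_undef h] at this
  simp at this

lemma swap_lemma {Z W : Type*} [MeasurableSpace Z] [MeasurableSpace W] (μ : Measure Z)
    [IsProbabilityMeasure μ] (ν : Measure W) [SFinite ν] (A : Z → ℂ) (g : Z → W → ℝ) (C : ℝ)
    (hA : StronglyMeasurable A) (hAC : ∀ z, ‖A z‖ ≤ C)
    (hg : StronglyMeasurable (fun u : Z × W => g u.1 u.2)) (hpos : ∀ z w, 0 ≤ g z w)
    (hint : ∀ z, Integrable (g z) ν) (hone : ∀ z, ∫ w, g z w ∂ν = 1) :
    ∫ w, ∫ z, A z * (g z w : ℂ) ∂μ ∂ν = ∫ z, A z ∂μ := by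
  have hAi : Integrable A μ := Integrable.of_bound hA.aestronglyMeasurable C (ae_of_all _ hAC)
  have hI : Integrable (fun u : Z × W => A u.1 * (g u.1 u.2 : ℂ)) (μ.prod ν) := by
    rw [integrable_prod_iff]
    · refine ⟨ae_of_all _ fun z => ((hint z).ofReal (𝕜 := ℂ)).const_mul (A z), ?_⟩
      have : (fun z => ∫ w, ‖A z * (g z w : ℂ)‖ ∂ν) = fun z => ‖A z‖ := by
        funext z
        simp_rw [norm_mul, Complex.norm_real, Real.norm_of_nonneg (hpos z _)]
        rw [integral_const_mul, hone, mul_one]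
      simp only [this]
      exact hAi.norm
    · exact ((hA.comp_measurable measurable_fst).mul
        (Complex.continuous_ofReal.comp_stronglyMeasurable hg)).aestronglyMeasurable
  rw [← integral_integral_swap (f := fun z w => A z * (g z w : ℂ)) hI]
  congr 1
  funext z
  rw [integral_const_mul, integral_complex_ofReal, hone]
  simp

lemma pos_lemma {Z W : Type*} [MeasurableSpace Z] [MeasurableSpace W] (μ : Measure Z)
    [IsProbabilityMeasure μ] (ν : Measure W) [SFinite ν] (a : Z → W → ℂ) (C : ℝ)
    (ha : StronglyMeasurable (fun u : Z × W => a u.1 u.2)) (haC : ∀ z w, ‖a z w‖ ≤ C)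
    (φ : W → ℂ) (hφm : StronglyMeasurable φ) (hφ : Integrable φ ν) :
    0 ≤ (∫ X, ∫ Y, conj (φ X) * (∫ z, a z X * conj (a z Y) ∂μ) * φ Y ∂ν ∂ν).re := by
  set S : Z → ℂ := fun z => ∫ Y, conj (a z Y) * φ Y ∂ν with hS
  have hasw : StronglyMeasurable (fun u : W × Z => a u.2 u.1) := ha.comp_measurable measurable_swap
  have hSm : StronglyMeasurable S := by
    have : StronglyMeasurable (fun u : Z × W => conj (a u.1 u.2) * φ u.2) :=
      (Complex.continuous_conj.comp_stronglyMeasurable ha).mul (hφm.comp_measurable measurable_snd)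
    exact this.integral_prod_right'
  have hSb : ∀ z, ‖S z‖ ≤ ∫ Y, C * ‖φ Y‖ ∂ν := fun z => by
    refine norm_integral_le_of_norm_le (hφ.norm.const_mul C) (ae_of_all _ fun Y => ?_)
    rw [norm_mul, RCLike.norm_conj]
    exact mul_le_mul_of_nonneg_right (haC _ _) (norm_nonneg _)
  set M := ∫ Y, C * ‖φ Y‖ ∂ν
  have step1 : ∀ X, ∫ Y, conj (φ X) * (∫ z, a z X * conj (a z Y) ∂μ) * φ Y ∂ν =
      ∫ z, conj (φ X) * a z X * S z ∂μ := by
    intro X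
    have haX : StronglyMeasurable (fun z => a z X) := ha.comp_measurable measurable_prodMk_right
    have hI : Integrable (fun u : W × Z => (a u.2 X * conj (a u.2 u.1)) * φ u.1) (ν.prod μ) := by
      refine Integrable.bdd_mul (c := C * C) (hφ.comp_fst μ) ?_ (ae_of_all _ fun u => ?_)
      · exact ((haX.comp_measurable measurable_snd).mul
          (Complex.continuous_conj.comp_stronglyMeasurable hasw)).aestronglyMeasurable
      · rw [norm_mul, RCLike.norm_conj]
        exact mul_le_mul (haC _ _) (haC _ _) (norm_nonneg _) ((norm_nonneg _).trans (haC u.2 X))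
    simp_rw [mul_assoc, integral_const_mul]
    congr 1
    simp_rw [← integral_mul_const]
    rw [integral_integral_swap (f := fun Y z => (a z X * conj (a z Y)) * φ Y) hI]
    simp_rw [mul_assoc, integral_const_mul]
    rfl
  simp_rw [step1]
  have hI2 : Integrable (fun u : W × Z => conj (φ u.1) * a u.2 u.1 * S u.2) (ν.prod μ) := by
    have h1 : Integrable (fun u : W × Z => (a u.2 u.1 * S u.2) * conj (φ u.1)) (ν.prod μ) := by
      have hc : Integrable (fun X => conj (φ X)) ν :=
        (Complex.conjCLE.toContinuousLinearMap.integrable_comp hφ)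
      refine Integrable.bdd_mul (c := C * M) (hc.comp_fst μ) ?_ (ae_of_all _ fun u => ?_)
      · exact (hasw.mul (hSm.comp_measurable measurable_snd)).aestronglyMeasurable
      · rw [norm_mul]
        exact mul_le_mul (haC _ _) (hSb _) (norm_nonneg _) ((norm_nonneg _).trans (haC u.2 u.1))
    refine h1.congr (ae_of_all _ fun u => ?_)
    simp only
    ring
  rw [integral_integral_swap (f := fun X z => conj (φ X) * a z X * S z) hI2]
  have : ∀ z, ∫ X, conj (φ X) * a z X * S z ∂ν = ((‖S z‖ ^ 2 : ℝ) : ℂ) := by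
    intro z
    rw [integral_mul_const]
    have : ∫ X, conj (φ X) * a z X ∂ν = conj (S z) := by
      rw [hS, ← integral_conj]
      congr 1; funext X
      simp [mul_comm]
    rw [this, Complex.conj_mul']
    simp
  simp_rw [this]
  rw [integral_complex_ofReal, Complex.ofReal_re]
  exact integral_nonneg fun z => by positivity

/-- Construction of quantum couplings (Lemma 4.1): if `μ ∈ Π(μ₁, μ₂)` is a
coupling of two probability measures on phase space `ℝ^{2d}`, then the Töplitz
operator `OP_ε^T((2πε)^{2d} μ)` is a density operator on `L²(ℝ^d) ⊗ L²(ℝ^d)`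
(hermitian, positive, trace one) whose partial traces are the Töplitz operators
`OP_ε^T((2πε)^d μ₁)` and `OP_ε^T((2πε)^d μ₂)`. -/
theorem toeplitz_quantization_of_coupling (d : ℕ) (ε : ℝ) (hε : 0 < ε)
    (μ1 μ2 : Measure (EuclideanSpace ℝ (Fin d) × EuclideanSpace ℝ (Fin d)))
    [IsProbabilityMeasure μ1] [IsProbabilityMeasure μ2]
    (μ : Measure ((EuclideanSpace ℝ (Fin d) × EuclideanSpace ℝ (Fin d)) ×
                  (EuclideanSpace ℝ (Fin d) × EuclideanSpace ℝ (Fin d))))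
    [IsProbabilityMeasure μ]
    (hμ1 : Measure.map Prod.fst μ = μ1) (hμ2 : Measure.map Prod.snd μ = μ2) :
    -- hermitian
    (∀ X Y, toeplitzKernel2 d ε μ Y X = conj (toeplitzKernel2 d ε μ X Y)) ∧
    -- trace one
    (∫ X : EuclideanSpace ℝ (Fin d) × EuclideanSpace ℝ (Fin d),
        toeplitzKernel2 d ε μ X X = 1) ∧
    -- positivity
    (∀ φ : EuclideanSpace ℝ (Fin d) × EuclideanSpace ℝ (Fin d) → ℂ,
        Continuous φ → HasCompactSupport φ →
        0 ≤ (∫ X : EuclideanSpace ℝ (Fin d) × EuclideanSpace ℝ (Fin d),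
              ∫ Y : EuclideanSpace ℝ (Fin d) × EuclideanSpace ℝ (Fin d),
                conj (φ X) * toeplitzKernel2 d ε μ X Y * φ Y).re) ∧
    -- first partial trace
    (∀ x y, ∫ w, toeplitzKernel2 d ε μ (x, w) (y, w) = toeplitzKernel1 d ε μ1 x y) ∧
    -- second partial trace
    (∀ x y, ∫ w, toeplitzKernel2 d ε μ (w, x) (w, y) = toeplitzKernel1 d ε μ2 x y) := by
  have hcc : ∀ q p x, coh d ε q p x * conj (coh d ε q p x) = ((‖coh d ε q p x‖ ^ 2 : ℝ) : ℂ) := by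
    intro q p x
    rw [Complex.mul_conj']
    simp
  set K := (Real.pi * ε) ^ (-(d : ℝ) / 4)
  have hb : ∀ q p x, ‖coh d ε q p x‖ ≤ K := coh_norm_le d ε hε
  have hK : 0 ≤ K := by positivity
  have hA2 : ∀ q p x y, ‖coh d ε q p x * conj (coh d ε q p y)‖ ≤ K * K := by
    intro q p x y
    rw [norm_mul, RCLike.norm_conj]
    exact mul_le_mul (hb _ _ _) (hb _ _ _) (norm_nonneg _) hK
  refine ⟨?_, ?_, ?_, ?_, ?_⟩
  · intro X Y
    unfold toeplitzKernel2
    rw [← integral_conj]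
    congr 1; funext z
    simp only [map_mul, Complex.conj_conj]
    ring
  · have h := swap_lemma μ (volume : Measure (EuclideanSpace ℝ (Fin d) × EuclideanSpace ℝ (Fin d)))
      (fun _ => 1) (fun z X => ‖coh d ε z.1.1 z.1.2 X.1‖ ^ 2 * ‖coh d ε z.2.1 z.2.2 X.2‖ ^ 2) 1
      stronglyMeasurable_const (by simp) ?_ (fun _ _ => by positivity) ?_ ?_
    · simp only [integral_const, probReal_univ, one_smul] at h
      rw [← h]
      unfold toeplitzKernel2
      congr 1; funext X; congr 1; funext z
      rw [Complex.ofReal_mul, ← hcc, ← hcc]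
      ring
    · exact (((coh_continuous d ε (by fun_prop) (by fun_prop) (by fun_prop)).norm.pow 2).mul
        ((coh_continuous d ε (by fun_prop) (by fun_prop) (by fun_prop)).norm.pow 2)).stronglyMeasurable
    · intro z
      exact (coh_sq_integrable d ε hε z.1.1 z.1.2).mul_prod (coh_sq_integrable d ε hε z.2.1 z.2.2)
    · intro z
      rw [Measure.volume_eq_prod, integral_prod_mul (fun x => ‖coh d ε z.1.1 z.1.2 x‖ ^ 2)
        (fun x => ‖coh d ε z.2.1 z.2.2 x‖ ^ 2), coh_sq_integral d ε hε, coh_sq_integral d ε hε, one_mul]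
  · intro φ hφ hφc
    have h := pos_lemma μ (volume : Measure (EuclideanSpace ℝ (Fin d) × EuclideanSpace ℝ (Fin d)))
      (fun z X => coh d ε z.1.1 z.1.2 X.1 * coh d ε z.2.1 z.2.2 X.2) (K * K)
      ((coh_continuous d ε (by fun_prop) (by fun_prop) (by fun_prop)).mul
        (coh_continuous d ε (by fun_prop) (by fun_prop) (by fun_prop))).stronglyMeasurable
      (fun z X => by
        rw [norm_mul]
        exact mul_le_mul (hb _ _ _) (hb _ _ _) (norm_nonneg _) hK)
      φ hφ.stronglyMeasurable (hφ.integrable_of_hasCompactSupport hφc)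
    convert h using 8 with X Y
    unfold toeplitzKernel2
    congr 1; funext z
    simp only [map_mul]
    ring
  · intro x y
    have h := swap_lemma μ (volume : Measure (EuclideanSpace ℝ (Fin d)))
      (fun z => coh d ε z.1.1 z.1.2 x * conj (coh d ε z.1.1 z.1.2 y))
      (fun z w => ‖coh d ε z.2.1 z.2.2 w‖ ^ 2) (K * K)
      ((coh_continuous d ε (by fun_prop) (by fun_prop) (by fun_prop)).mul
        (Complex.continuous_conj.comp
          (coh_continuous d ε (by fun_prop) (by fun_prop) (by fun_prop)))).stronglyMeasurable
      (fun z => hA2 _ _ _ _)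
      ((coh_continuous d ε (by fun_prop) (by fun_prop) (by fun_prop)).norm.pow 2).stronglyMeasurable
      (fun _ _ => by positivity) (fun z => coh_sq_integrable d ε hε _ _)
      (fun z => coh_sq_integral d ε hε _ _)
    unfold toeplitzKernel1 toeplitzKernel2
    rw [← hμ1, integral_map measurable_fst.aemeasurable, ← h]
    · congr 1; funext w; congr 1; funext z
      rw [← hcc]
      ring
    · exact ((coh_continuous d ε (by fun_prop) (by fun_prop) (by fun_prop)).mul
        (Complex.continuous_conj.comp
          (coh_continuous d ε (by fun_prop) (by fun_prop) (by fun_prop)))).aestronglyMeasurable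
  · intro x y
    have h := swap_lemma μ (volume : Measure (EuclideanSpace ℝ (Fin d)))
      (fun z => coh d ε z.2.1 z.2.2 x * conj (coh d ε z.2.1 z.2.2 y))
      (fun z w => ‖coh d ε z.1.1 z.1.2 w‖ ^ 2) (K * K)
      ((coh_continuous d ε (by fun_prop) (by fun_prop) (by fun_prop)).mul
        (Complex.continuous_conj.comp
          (coh_continuous d ε (by fun_prop) (by fun_prop) (by fun_prop)))).stronglyMeasurable
      (fun z => hA2 _ _ _ _)
      ((coh_continuous d ε (by fun_prop) (by fun_prop) (by fun_prop)).norm.pow 2).stronglyMeasurable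
      (fun _ _ => by positivity) (fun z => coh_sq_integrable d ε hε _ _)
      (fun z => coh_sq_integral d ε hε _ _)
    unfold toeplitzKernel1 toeplitzKernel2
    rw [← hμ2, integral_map measurable_snd.aemeasurable, ← h]
    · congr 1; funext w; congr 1; funext z
      rw [← hcc]
      ring
    · exact ((coh_continuous d ε (by fun_prop) (by fun_prop) (by fun_prop)).mul
        (Complex.continuous_conj.comp
          (coh_continuous d ε (by fun_prop) (by fun_prop) (by fun_prop)))).aestronglyMeasurable

end
end

section
/- Let ρ_1^ε, ρ_2^ε be density operators on L^2(R^d) with Husimi transforms W̃_ε[ρ_1^ε], W̃_ε[ρ_2^ε]. Then MK_2^ε(ρ_1^ε, ρ_2^ε)^2 ≥ dist_{MK,2}(W̃_ε[ρ_1^ε], W̃_ε[ρ_2^ε])^2 − 2dε. -/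
open MeasureTheory
open scoped ComplexConjugate RealInnerProductSpace ENNReal

noncomputable section

/-- Kernel `Σ λ_n φ_n(x) conj(φ_n(y))` of a density operator on `L²(ℝ^d)`. -/
def densKernel (d : ℕ) (lam : ℕ → ℝ) (φ : ℕ → EuclideanSpace ℝ (Fin d) → ℂ)
    (x y : EuclideanSpace ℝ (Fin d)) : ℂ :=
  ∑' n, (lam n : ℂ) * φ n x * conj (φ n y)

/-- Kernel of a density operator on `L²(ℝ^d × ℝ^d)` given by a decomposition. -/
def kerOf (d : ℕ) (lam : ℕ → ℝ)
    (ψ : ℕ → EuclideanSpace ℝ (Fin d) × EuclideanSpace ℝ (Fin d) → ℂ)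
    (X Y : EuclideanSpace ℝ (Fin d) × EuclideanSpace ℝ (Fin d)) : ℂ :=
  ∑' n, (lam n : ℂ) * ψ n X * conj (ψ n Y)

/-- The Husimi transform at scale `ε` of the density operator with spectral
decomposition `(λ, φ)`: `W̃_ε[ρ](q,p) = (2πε)^{−d} Σ λ_n |⟨(q,p),ε | φ_n⟩|²`. -/
def husimi (d : ℕ) (ε : ℝ) (lam : ℕ → ℝ)
    (φ : ℕ → EuclideanSpace ℝ (Fin d) → ℂ)
    (z : EuclideanSpace ℝ (Fin d) × EuclideanSpace ℝ (Fin d)) : ℝ :=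
  (2 * Real.pi * ε) ^ (-(d : ℝ)) *
    ∑' n, lam n * Complex.normSq (∫ x, conj (coh d ε z.1 z.2 x) * φ n x)

/-- The `i`-th component of `Q` (multiplication by `x₁ i − x₂ i`). -/
def Qop (d : ℕ) (i : Fin d)
    (f : EuclideanSpace ℝ (Fin d) × EuclideanSpace ℝ (Fin d) → ℂ) :
    EuclideanSpace ℝ (Fin d) × EuclideanSpace ℝ (Fin d) → ℂ :=
  fun x => ((x.1 i - x.2 i : ℝ) : ℂ) * f x

/-- The `i`-th component of `P = −iε(∇_{x₁} − ∇_{x₂})`. -/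
def Pop (d : ℕ) (ε : ℝ) (i : Fin d)
    (f : EuclideanSpace ℝ (Fin d) × EuclideanSpace ℝ (Fin d) → ℂ) :
    EuclideanSpace ℝ (Fin d) × EuclideanSpace ℝ (Fin d) → ℂ :=
  fun x => (-Complex.I * (ε : ℂ)) *
    (fderiv ℝ f x (EuclideanSpace.single i 1, (0 : EuclideanSpace ℝ (Fin d)))
      - fderiv ℝ f x ((0 : EuclideanSpace ℝ (Fin d)), EuclideanSpace.single i 1))

/-- Quadratic form `ψ ↦ ⟨ψ, (Q*Q+P*P)ψ⟩`, valued in `ℝ≥0∞`. -/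
def costForm (d : ℕ) (ε : ℝ)
    (ψ : EuclideanSpace ℝ (Fin d) × EuclideanSpace ℝ (Fin d) → ℂ) : ℝ≥0∞ :=
  ∑ i : Fin d,
    ((∫⁻ x, (‖Qop d i ψ x‖₊ : ℝ≥0∞) ^ 2) + ∫⁻ x, (‖Pop d ε i ψ x‖₊ : ℝ≥0∞) ^ 2)

/-- `MK₂^ε(ρ₁,ρ₂)²`: infimum of `trace((Q*Q+P*P)R)` over quantum couplings `R`
of `ρ₁, ρ₂`, the couplings being described by spectral decompositions with
partial-trace kernels `k₁, k₂`. -/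
def MKsq (d : ℕ) (ε : ℝ)
    (k1 k2 : EuclideanSpace ℝ (Fin d) → EuclideanSpace ℝ (Fin d) → ℂ) : ℝ≥0∞ :=
  sInf { c : ℝ≥0∞ |
    ∃ (lam : ℕ → ℝ)
      (ψ : ℕ → EuclideanSpace ℝ (Fin d) × EuclideanSpace ℝ (Fin d) → ℂ),
      (∀ n, 0 ≤ lam n) ∧ (∑' n, lam n = 1) ∧
      (∀ n, ContDiff ℝ 1 (ψ n)) ∧
      (∀ m n, ∫ X, conj (ψ m X) * ψ n X = if m = n then 1 else 0) ∧
      (∀ x y, ∫ w, kerOf d lam ψ (x, w) (y, w) = k1 x y) ∧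
      (∀ x y, ∫ w, kerOf d lam ψ (w, x) (w, y) = k2 x y) ∧
      c = ∑' n, ENNReal.ofReal (lam n) * costForm d ε (ψ n) }

/-- Squared Wasserstein-2 distance between (nonnegative Borel) measures on
phase space `ℝ^{2d}`. -/
def W2sq (d : ℕ)
    (μ1 μ2 : Measure (EuclideanSpace ℝ (Fin d) × EuclideanSpace ℝ (Fin d))) : ℝ≥0∞ :=
  sInf { c : ℝ≥0∞ |
    ∃ γ : Measure ((EuclideanSpace ℝ (Fin d) × EuclideanSpace ℝ (Fin d)) ×
                   (EuclideanSpace ℝ (Fin d) × EuclideanSpace ℝ (Fin d))),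
      IsProbabilityMeasure γ ∧
      Measure.map Prod.fst γ = μ1 ∧ Measure.map Prod.snd γ = μ2 ∧
      c = ∫⁻ z, ENNReal.ofReal (‖z.1.1 - z.2.1‖ ^ 2 + ‖z.1.2 - z.2.2‖ ^ 2) ∂γ }

open FourierTransform in
theorem planch_ae {V : Type*} [NormedAddCommGroup V] [InnerProductSpace ℝ V] [FiniteDimensional ℝ V]
    [MeasurableSpace V] [BorelSpace V] (f : V → ℂ) (h1 : Integrable f) (h2 : MemLp f 2) :
    ∀ᵐ x, (𝓕 (h2.toLp f) : Lp (α := V) ℂ 2) x = 𝓕 f x := by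
  apply ae_eq_of_integral_contDiff_smul_eq
  · exact (Lp.memLp _).locallyIntegrable (by norm_num)
  · refine Continuous.locallyIntegrable ?_
    exact VectorFourier.fourierIntegral_continuous Real.continuous_fourierChar (by exact continuous_inner) h1
  intro g hg hgs
  have hgs' : HasCompactSupport (fun x => (g x : ℂ)) := hgs.comp_left (g := Complex.ofReal) rfl
  have hg' : ContDiff ℝ ((⊤ : ℕ∞) : WithTop ℕ∞) (fun x => (g x : ℂ)) := Complex.ofRealCLM.contDiff.comp hg
  let G : SchwartzMap V ℂ := hgs'.toSchwartzMap hg'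
  have e1 := congrArg (fun T => T G) (Lp.fourier_toTemperedDistribution_eq (h2.toLp f))
  simp only [TemperedDistribution.fourier_apply, Lp.toTemperedDistribution_apply] at e1
  have e2 := VectorFourier.integral_fourierIntegral_smul_eq_flip (μ := volume) (ν := volume) (L := innerₗ V)
    Real.continuous_fourierChar (by exact continuous_inner) h1 (G.integrable (μ := volume))
  have e3 : ∫ x, (𝓕 G) x • (h2.toLp f) x = ∫ x, (f x) • (𝓕 (G : V → ℂ) x) := by
    apply integral_congr_ae
    filter_upwards [h2.coeFn_toLp] with x hx
    rw [hx, SchwartzMap.fourier_coe, smul_eq_mul, smul_eq_mul, mul_comm]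
  have hG : ∀ x, G x = (g x : ℂ) := fun x => rfl
  have e4 : (innerₗ V).flip = innerₗ V := by
    ext x y; simp
  rw [e4] at e2
  calc _ = ∫ x, G x • (𝓕 (h2.toLp f) : Lp (α := V) ℂ 2 volume) x := by
        simp [hG]
    _ = _ := e1.symm
    _ = _ := e3
    _ = ∫ x, 𝓕 f x • G x := e2.symm
    _ = _ := by simp [hG, mul_comm]

open FourierTransform in
theorem planch {V : Type*} [NormedAddCommGroup V] [InnerProductSpace ℝ V] [FiniteDimensional ℝ V]
    [MeasurableSpace V] [BorelSpace V] (f : V → ℂ) (h1 : Integrable f) (h2 : MemLp f 2) :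
    ∫⁻ w, ‖𝓕 f w‖ₑ ^ 2 = ∫⁻ x, ‖f x‖ₑ ^ 2 := by
  have key : ∀ g : V → ℂ, ∫⁻ w, ‖g w‖ₑ ^ 2 = (eLpNorm g 2 volume) ^ 2 := by
    intro g
    rw [eLpNorm_eq_lintegral_rpow_enorm_toReal (by norm_num) (by norm_num)]
    simp only [ENNReal.toReal_ofNat, ENNReal.rpow_ofNat]
    rw [← ENNReal.rpow_natCast, ← ENNReal.rpow_mul]
    norm_num
  rw [key, key, ← eLpNorm_congr_ae (planch_ae f h1 h2)]
  congr 1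
  have := Lp.norm_fourier_eq (h2.toLp f)
  rw [Lp.norm_def, Lp.norm_def, ENNReal.toReal_eq_toReal_iff' (Lp.eLpNorm_ne_top _) (Lp.eLpNorm_ne_top _)] at this
  rw [this]
  exact eLpNorm_congr_ae h2.coeFn_toLp

open FourierTransform in
theorem planch_eps (d : ℕ) (ε : ℝ) (hε : 0 < ε) (f : EuclideanSpace ℝ (Fin d) → ℂ)
    (h1 : Integrable f) (h2 : MemLp f 2) :
    ENNReal.ofReal ((2 * Real.pi * ε) ^ (-(d : ℝ))) *
      ∫⁻ p : EuclideanSpace ℝ (Fin d), ‖∫ x, Complex.exp (-(Complex.I * ((⟪p, x⟫ / ε : ℝ) : ℂ))) * f x‖ₑ ^ 2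
      = ∫⁻ x, ‖f x‖ₑ ^ 2 := by
  rw [← planch f h1 h2]
  have hc : (0:ℝ) < 2 * Real.pi * ε := by positivity
  have : ∀ w, 𝓕 f w = (fun p : EuclideanSpace ℝ (Fin d) =>
      ∫ x, Complex.exp (-(Complex.I * ((⟪p, x⟫ / ε : ℝ) : ℂ))) * f x) ((2 * Real.pi * ε) • w) := by
    intro w
    rw [Real.fourier_eq']
    refine integral_congr_ae (.of_forall fun x => ?_)
    simp only [smul_eq_mul]
    congr 2
    rw [real_inner_smul_left, real_inner_comm x w]
    have : 2 * Real.pi * ε * ⟪x, w⟫ / ε = 2 * Real.pi * ⟪x, w⟫ := by field_simp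
    rw [this]; push_cast; ring
  simp_rw [this]
  set F : EuclideanSpace ℝ (Fin d) → ℝ≥0∞ := fun p =>
    ‖∫ x, Complex.exp (-(Complex.I * ((⟪p, x⟫ / ε : ℝ) : ℂ))) * f x‖ₑ ^ 2 with hF
  change _ * ∫⁻ p, F p = ∫⁻ w, F ((2 * Real.pi * ε) • w)
  have hme : MeasurableEmbedding (fun w : EuclideanSpace ℝ (Fin d) => (2 * Real.pi * ε) • w) :=
    (Homeomorph.smulOfNeZero _ hc.ne').measurableEmbedding
  rw [← hme.lintegral_map, Measure.map_addHaar_smul _ hc.ne', lintegral_smul_measure]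
  simp only [finrank_euclideanSpace, Fintype.card_fin, smul_eq_mul]
  congr 2
  rw [abs_of_pos (by positivity), Real.rpow_neg hc.le, Real.rpow_natCast]

abbrev Eu (d : ℕ) := EuclideanSpace ℝ (Fin d)

/-- real Gaussian profile of the coherent state -/
def gau (d : ℕ) (ε : ℝ) (y : Eu d) : ℝ :=
  (Real.pi * ε) ^ (-(d : ℝ) / 4) * Real.exp (-(‖y‖ ^ 2) / (2 * ε))

/-- the oscillating factor of the conjugate coherent state -/
def osc (d : ℕ) (ε : ℝ) (p x : Eu d) : ℂ :=
  Complex.exp (-(Complex.I * ((⟪p, x⟫ / ε : ℝ) : ℂ)))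

theorem conj_coh (d : ℕ) (ε : ℝ) (q p x : Eu d) :
    conj (coh d ε q p x) = osc d ε p x * (gau d ε (x - q) : ℂ) := by
  unfold coh osc gau
  rw [map_mul, Complex.conj_ofReal, ← Complex.exp_conj, map_add, Complex.conj_ofReal, map_mul,
    Complex.conj_I, Complex.conj_ofReal, Complex.exp_add, Complex.ofReal_mul, Complex.ofReal_exp,
    neg_mul]
  ring

@[fun_prop]
theorem gau_cont (d : ℕ) (ε : ℝ) : Continuous (gau d ε) := by
  unfold gau; fun_prop

@[fun_prop]
theorem osc_cont (d : ℕ) (ε : ℝ) : Continuous (fun z : Eu d × Eu d => osc d ε z.1 z.2) := by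
  unfold osc; fun_prop

theorem norm_osc (d : ℕ) (ε : ℝ) (p x : Eu d) : ‖osc d ε p x‖ = 1 := by
  unfold osc
  rw [Complex.norm_exp]
  simp

theorem gau_pos (d : ℕ) (ε : ℝ) (hε : 0 < ε) (y : Eu d) : 0 < gau d ε y := by
  unfold gau; positivity

theorem gau_le (d : ℕ) (ε : ℝ) (hε : 0 < ε) (y : Eu d) :
    gau d ε y ≤ (Real.pi * ε) ^ (-(d : ℝ) / 4) := by
  unfold gau
  apply mul_le_of_le_one_right (by positivity)
  apply Real.exp_le_one_iff.2
  rw [neg_div]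
  have : 0 ≤ ‖y‖ ^ 2 / (2 * ε) := by positivity
  linarith

theorem gau_sq (d : ℕ) (ε : ℝ) (hε : 0 < ε) (y : Eu d) :
    gau d ε y ^ 2 = ∏ j : Fin d, ((Real.pi * ε) ^ (-(1/2) : ℝ) * Real.exp (-(1/ε) * (y j) ^ 2)) := by
  have hc : 0 < Real.pi * ε := by positivity
  rw [Finset.prod_mul_distrib, ← Real.exp_sum, ← Finset.mul_sum, Finset.prod_const,
    Finset.card_univ, Fintype.card_fin]
  unfold gau
  rw [mul_pow, ← Real.exp_nat_mul, EuclideanSpace.real_norm_sq_eq,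
    ← Real.rpow_natCast ((Real.pi * ε) ^ (-(d : ℝ) / 4)), ← Real.rpow_natCast _ d,
    ← Real.rpow_mul hc.le, ← Real.rpow_mul hc.le]
  congr 2
  · push_cast; ring
  · push_cast; field_simp

theorem one_moment0 (ε : ℝ) (hε : 0 < ε) :
    ∫ t : ℝ, (Real.pi * ε) ^ (-(1/2) : ℝ) * Real.exp (-(1/ε) * t ^ 2) = 1 := by
  have hc : 0 < Real.pi * ε := by positivity
  rw [integral_const_mul, integral_gaussian, Real.sqrt_eq_rpow]
  rw [show Real.pi / (1/ε) = Real.pi * ε by field_simp, ← Real.rpow_add hc]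
  norm_num

theorem one_moment2 (ε : ℝ) (hε : 0 < ε) :
    ∫ t : ℝ, t ^ 2 * ((Real.pi * ε) ^ (-(1/2) : ℝ) * Real.exp (-(1/ε) * t ^ 2)) = ε / 2 := by
  have hb : (0:ℝ) < 1 / ε := by positivity
  have i0 := integrable_exp_neg_mul_sq hb
  have i1 := integrable_mul_exp_neg_mul_sq hb
  have i2 : Integrable (fun t : ℝ => t ^ 2 * Real.exp (-(1/ε) * t ^ 2)) := by
    have := integrable_rpow_mul_exp_neg_mul_sq hb (s := 2) (by norm_num)
    simpa using this
  have hd : ∀ t : ℝ, HasDerivAt (fun t => Real.exp (-(1/ε) * t ^ 2))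
      (-(2/ε) * (t * Real.exp (-(1/ε) * t ^ 2))) t := by
    intro t
    have := (((hasDerivAt_id t).pow 2).const_mul (-(1/ε))).exp
    convert! this using 1
    simp; ring
  have ibp := integral_mul_deriv_eq_deriv_mul_of_integrable (u := fun t : ℝ => t) (u' := fun _ => 1)
    (v := fun t => Real.exp (-(1/ε) * t ^ 2))
    (v' := fun t => -(2/ε) * (t * Real.exp (-(1/ε) * t ^ 2)))
    (fun x _ => hasDerivAt_id x) (fun x _ => hd x)
    (by convert! i2.const_mul (-(2/ε)) using 2 with t; simp only [Pi.mul_apply]; ring) (by simpa [Pi.mul_def] using i0)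
    (by simpa [Pi.mul_def] using i1)
  have m0 := one_moment0 ε hε
  rw [integral_const_mul] at m0
  have : ∫ t : ℝ, t ^ 2 * ((Real.pi * ε) ^ (-(1/2) : ℝ) * Real.exp (-(1/ε) * t ^ 2))
     = (Real.pi * ε) ^ (-(1/2) : ℝ) * (-(ε/2)) * ∫ t : ℝ, t * (-(2/ε) * (t * Real.exp (-(1/ε) * t ^ 2))) := by
    rw [← integral_const_mul]
    refine integral_congr_ae (.of_forall fun t => ?_)
    simp only
    field_simp
  rw [this, ibp]
  simp only [one_mul]
  linear_combination (ε/2) * m0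

theorem lint_pi (d : ℕ) (f : Fin d → ℝ → ℝ) (hf : ∀ j t, 0 ≤ f j t) (hi : ∀ j, Integrable (f j)) :
    ∫⁻ y : Eu d, ENNReal.ofReal (∏ j, f j (y j)) = ENNReal.ofReal (∏ j, ∫ t, f j t) := by
  have hi' : Integrable (fun y : Fin d → ℝ => ∏ j, f j (y j)) := Integrable.fintype_prod hi
  rw [← integral_fintype_prod_volume_eq_prod]
  rw [ofReal_integral_eq_lintegral_ofReal hi' (.of_forall fun y => Finset.prod_nonneg fun j _ => hf j _)]
  rw [← (PiLp.volume_preserving_toLp (Fin d)).lintegral_comp_emb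
    (MeasurableEquiv.toLp 2 _).measurableEmbedding]

theorem gau_moment0 (d : ℕ) (ε : ℝ) (hε : 0 < ε) :
    ∫⁻ y : Eu d, ENNReal.ofReal (gau d ε y ^ 2) = 1 := by
  simp_rw [gau_sq d ε hε]
  have hc : 0 < Real.pi * ε := by positivity
  rw [lint_pi d (fun _ t => (Real.pi * ε) ^ (-(1/2) : ℝ) * Real.exp (-(1/ε) * t ^ 2))
    (fun j t => by positivity) (fun j => (integrable_exp_neg_mul_sq (by positivity)).const_mul _)]
  simp only [one_moment0 ε hε]
  simp

theorem gau_moment2 (d : ℕ) (ε : ℝ) (hε : 0 < ε) (i : Fin d) :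
    ∫⁻ y : Eu d, ENNReal.ofReal (y i ^ 2 * gau d ε y ^ 2) = ENNReal.ofReal (ε / 2) := by
  simp_rw [gau_sq d ε hε]
  have hc : 0 < Real.pi * ε := by positivity
  have hb : (0:ℝ) < 1 / ε := by positivity
  have e : ∀ y : Eu d, y i ^ 2 * ∏ j : Fin d, ((Real.pi * ε) ^ (-(1/2) : ℝ) * Real.exp (-(1/ε) * (y j) ^ 2))
    = ∏ j : Fin d, (fun j t => (if j = i then t ^ 2 else 1) *
        ((Real.pi * ε) ^ (-(1/2) : ℝ) * Real.exp (-(1/ε) * t ^ 2))) j (y j) := by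
    intro y
    simp only
    rw [Finset.prod_mul_distrib (f := fun j => if j = i then y j ^ 2 else 1),
      Finset.prod_ite_eq' Finset.univ i (fun j => y j ^ 2)]
    simp
  rw [lintegral_congr fun y => congrArg ENNReal.ofReal (e y)]
  rw [lint_pi d (fun j t => (if j = i then t ^ 2 else 1) *
        ((Real.pi * ε) ^ (-(1/2) : ℝ) * Real.exp (-(1/ε) * t ^ 2))) (fun j t => by split_ifs <;> positivity)]
  · congr 1
    rw [Finset.prod_eq_single i]
    · simp only [if_true]
      exact one_moment2 ε hε
    · intro j _ hj
      simp only [hj, if_false, one_mul]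
      exact one_moment0 ε hε
    · simp
  · intro j
    by_cases h : j = i
    · simp only [h, if_true]
      have i2 : Integrable (fun t : ℝ => t ^ 2 * Real.exp (-(1/ε) * t ^ 2)) := by
        have := integrable_rpow_mul_exp_neg_mul_sq hb (s := 2) (by norm_num)
        simpa using this
      convert! i2.const_mul ((Real.pi * ε) ^ (-(1/2) : ℝ)) using 2 with t
      ring
    · simp only [h, if_false, one_mul]
      exact (integrable_exp_neg_mul_sq (by positivity)).const_mul _

theorem moment_one (d : ℕ) (ε : ℝ) (hε : 0 < ε) (i : Fin d) (a b : ℂ) :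
    ∫⁻ y : Eu d, ‖a + (y i : ℂ) * b‖ₑ ^ 2 * ENNReal.ofReal (gau d ε y ^ 2)
      = ‖a‖ₑ ^ 2 + ENNReal.ofReal (ε / 2) * ‖b‖ₑ ^ 2 := by
  have hneg : ∫⁻ y : Eu d, ‖a + (y i : ℂ) * b‖ₑ ^ 2 * ENNReal.ofReal (gau d ε y ^ 2)
      = ∫⁻ y : Eu d, ‖a - (y i : ℂ) * b‖ₑ ^ 2 * ENNReal.ofReal (gau d ε y ^ 2) := by
    rw [← lintegral_neg_eq_self]
    refine lintegral_congr fun y => ?_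
    have : gau d ε (-y) = gau d ε y := by simp [gau]
    rw [this]
    simp [sub_eq_add_neg]
  have hm1 : Measurable fun y : Eu d => ENNReal.ofReal (gau d ε y ^ 2) := by fun_prop
  have hm2 : Measurable fun y : Eu d => ENNReal.ofReal (y i ^ 2 * gau d ε y ^ 2) := by fun_prop
  have hs : (2 : ℝ≥0∞) * ∫⁻ y : Eu d, ‖a + (y i : ℂ) * b‖ₑ ^ 2 * ENNReal.ofReal (gau d ε y ^ 2)
      = 2 * (‖a‖ₑ ^ 2 + ENNReal.ofReal (ε / 2) * ‖b‖ₑ ^ 2) := by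
    rw [two_mul]
    nth_rw 2 [hneg]
    rw [← lintegral_add_left (by fun_prop)]
    have : ∀ y : Eu d, ‖a + (y i : ℂ) * b‖ₑ ^ 2 * ENNReal.ofReal (gau d ε y ^ 2) +
        ‖a - (y i : ℂ) * b‖ₑ ^ 2 * ENNReal.ofReal (gau d ε y ^ 2)
        = 2 * (‖a‖ₑ ^ 2 * ENNReal.ofReal (gau d ε y ^ 2) +
          ENNReal.ofReal (y i ^ 2 * gau d ε y ^ 2) * ‖b‖ₑ ^ 2) := by
      intro y
      have e : ∀ z : ℂ, ‖z‖ₑ ^ 2 = ENNReal.ofReal (Complex.normSq z) := by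
        intro z
        rw [← ofReal_norm, ← ENNReal.ofReal_pow (norm_nonneg _), Complex.normSq_eq_norm_sq]
      have h2 : (2 : ℝ≥0∞) = ENNReal.ofReal 2 := by simp
      have n := Complex.normSq_nonneg
      simp only [e, h2]
      rw [← ENNReal.ofReal_mul (n _), ← ENNReal.ofReal_mul (n _), ← ENNReal.ofReal_mul (n _),
        ← ENNReal.ofReal_mul (by positivity),
        ← ENNReal.ofReal_add (mul_nonneg (n _) (by positivity)) (mul_nonneg (n _) (by positivity)),
        ← ENNReal.ofReal_add (mul_nonneg (n _) (by positivity)) (mul_nonneg (by positivity) (n _)),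
        ← ENNReal.ofReal_mul (by positivity)]
      congr 1
      simp only [Complex.normSq_apply]
      simp
      ring
    simp_rw [this]
    rw [lintegral_const_mul _ (by fun_prop), lintegral_add_left (by fun_prop),
      lintegral_const_mul _ hm1, lintegral_mul_const _ hm2, gau_moment0 d ε hε, gau_moment2 d ε hε, mul_one]
  exact (ENNReal.mul_right_inj (by norm_num) (by norm_num)).1 hs

theorem moment_two (d : ℕ) (ε : ℝ) (hε : 0 < ε) (i : Fin d) (a b : ℂ) :
    ∫⁻ Y : Eu d × Eu d, ‖a + ((Y.1 i - Y.2 i : ℝ) : ℂ) * b‖ₑ ^ 2 *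
        ENNReal.ofReal ((gau d ε Y.1 * gau d ε Y.2) ^ 2)
      = ‖a‖ₑ ^ 2 + ENNReal.ofReal ε * ‖b‖ₑ ^ 2 := by
  rw [Measure.volume_eq_prod, lintegral_prod _ (by fun_prop)]
  have : ∀ y1 : Eu d, ∫⁻ y2 : Eu d, ‖a + ((y1 i - y2 i : ℝ) : ℂ) * b‖ₑ ^ 2 *
        ENNReal.ofReal ((gau d ε y1 * gau d ε y2) ^ 2)
      = (‖a + (y1 i : ℂ) * b‖ₑ ^ 2 + ENNReal.ofReal (ε / 2) * ‖b‖ₑ ^ 2) * ENNReal.ofReal (gau d ε y1 ^ 2) := by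
    intro y1
    have h := moment_one d ε hε i (a + (y1 i : ℂ) * b) (-b)
    rw [enorm_neg] at h
    rw [← h, ← lintegral_mul_const _ (by fun_prop)]
    refine lintegral_congr fun y2 => ?_
    rw [mul_pow, mul_comm (gau d ε y1 ^ 2), ENNReal.ofReal_mul (by positivity), ← mul_assoc]
    congr 4
    push_cast; ring
  simp only
  simp_rw [this, add_mul]
  rw [lintegral_add_left (by fun_prop), moment_one d ε hε, lintegral_const_mul _ (by fun_prop),
    gau_moment0 d ε hε, mul_one, add_assoc, ← add_mul, ← ENNReal.ofReal_add (by positivity) (by positivity)]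
  simp

instance volIsAddHaar (d : ℕ) : (volume : Measure (Eu d × Eu d)).IsAddHaarMeasure :=
  inferInstanceAs ((volume : Measure (Eu d)).prod (volume : Measure (Eu d))).IsAddHaarMeasure

instance volIsNegInv (d : ℕ) : (volume : Measure (Eu d × Eu d)).IsNegInvariant :=
  ⟨((Measure.measurePreserving_neg (volume : Measure (Eu d))).prod
    (Measure.measurePreserving_neg (volume : Measure (Eu d)))).map_eq⟩

theorem moment_two_sub (d : ℕ) (ε : ℝ) (hε : 0 < ε) (i : Fin d) (a b : ℂ) (X : Eu d × Eu d) :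
    ∫⁻ Q : Eu d × Eu d, ‖a + (((X.1 - Q.1) i - (X.2 - Q.2) i : ℝ) : ℂ) * b‖ₑ ^ 2 *
        ENNReal.ofReal ((gau d ε (X.1 - Q.1) * gau d ε (X.2 - Q.2)) ^ 2)
      = ‖a‖ₑ ^ 2 + ENNReal.ofReal ε * ‖b‖ₑ ^ 2 := by
  rw [← moment_two d ε hε i a b]
  exact lintegral_sub_left_eq_self (fun Y : Eu d × Eu d => ‖a + ((Y.1 i - Y.2 i : ℝ) : ℂ) * b‖ₑ ^ 2 *
        ENNReal.ofReal ((gau d ε Y.1 * gau d ε Y.2) ^ 2)) X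

theorem moment_two_sub' (d : ℕ) (ε : ℝ) (hε : 0 < ε) (i : Fin d) (a b : ℂ) (Q : Eu d × Eu d) :
    ∫⁻ X : Eu d × Eu d, ‖a + (((X.1 - Q.1) i - (X.2 - Q.2) i : ℝ) : ℂ) * b‖ₑ ^ 2 *
        ENNReal.ofReal ((gau d ε (X.1 - Q.1) * gau d ε (X.2 - Q.2)) ^ 2)
      = ‖a‖ₑ ^ 2 + ENNReal.ofReal ε * ‖b‖ₑ ^ 2 := by
  rw [← moment_two d ε hε i a b]
  exact lintegral_sub_right_eq_self (fun Y : Eu d × Eu d => ‖a + ((Y.1 i - Y.2 i : ℝ) : ℂ) * b‖ₑ ^ 2 *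
        ENNReal.ofReal ((gau d ε Y.1 * gau d ε Y.2) ^ 2)) Q

theorem lint_sq {α : Type*} [MeasurableSpace α] {μ : Measure α} (g : α → ℂ) :
    ∫⁻ w, ‖g w‖ₑ ^ 2 ∂μ = (eLpNorm g 2 μ) ^ 2 := by
  rw [eLpNorm_eq_lintegral_rpow_enorm_toReal (by norm_num) (by norm_num)]
  simp only [ENNReal.toReal_ofNat, ENNReal.rpow_ofNat]
  rw [← ENNReal.rpow_natCast, ← ENNReal.rpow_mul]
  norm_num

theorem memLp2 {α : Type*} [MeasurableSpace α] {μ : Measure α} {g : α → ℂ}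
    (hg : AEStronglyMeasurable g μ) (h : ∫⁻ w, ‖g w‖ₑ ^ 2 ∂μ ≠ ⊤) : MemLp g 2 μ := by
  refine ⟨hg, ?_⟩
  rw [lint_sq] at h
  refine lt_top_iff_ne_top.2 fun h' => h ?_
  rw [h']; simp

/-- the normalising constant `(2πε)^{-d}` -/
def CC (d : ℕ) (ε : ℝ) : ℝ≥0∞ := ENNReal.ofReal ((2 * Real.pi * ε) ^ (-(d : ℝ)))

theorem enorm_gau_sq (d : ℕ) (ε : ℝ) (y : Eu d) :
    ‖(gau d ε y : ℂ)‖ₑ ^ 2 = ENNReal.ofReal (gau d ε y ^ 2) := by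
  rw [← ofReal_norm, ← ENNReal.ofReal_pow (norm_nonneg _), Complex.norm_real, Real.norm_eq_abs, sq_abs]

theorem gau_memLp (d : ℕ) (ε : ℝ) (hε : 0 < ε) (q : Eu d) :
    MemLp (fun x => (gau d ε (x - q) : ℂ)) 2 := by
  apply memLp2 (by fun_prop)
  simp_rw [enorm_gau_sq]
  rw [lintegral_sub_right_eq_self (fun y => ENNReal.ofReal (gau d ε y ^ 2)), gau_moment0 d ε hε]
  norm_num

theorem planch_le (d : ℕ) (ε : ℝ) (hε : 0 < ε) (f : Eu d → ℂ) (h1 : Integrable f) :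
    CC d ε * ∫⁻ p : Eu d, ‖∫ x, osc d ε p x * f x‖ₑ ^ 2 ≤ ∫⁻ x, ‖f x‖ₑ ^ 2 := by
  by_cases h : ∫⁻ x, ‖f x‖ₑ ^ 2 = ⊤
  · rw [h]; exact le_top
  · exact (planch_eps d ε hε f h1 (memLp2 h1.1 h)).le

theorem coh_amp (d : ℕ) (ε : ℝ) (q p : Eu d) (g : Eu d → ℂ) :
    ∫ x, conj (coh d ε q p x) * g x = ∫ x, osc d ε p x * ((gau d ε (x - q) : ℂ) * g x) := by
  simp_rw [conj_coh, mul_assoc]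

@[fun_prop]
theorem coh_cont (d : ℕ) (ε : ℝ) :
    Continuous (fun w : (Eu d × Eu d) × Eu d => coh d ε w.1.1 w.1.2 w.2) := by
  unfold coh; fun_prop

theorem amp_meas (d : ℕ) (ε : ℝ) (g : Eu d → ℂ) (hg : Measurable g) :
    Measurable (fun z : Eu d × Eu d => ∫ x, conj (coh d ε z.1 z.2 x) * g x) := by
  have : StronglyMeasurable (fun w : (Eu d × Eu d) × Eu d => conj (coh d ε w.1.1 w.1.2 w.2) * g w.2) := by
    apply Measurable.stronglyMeasurable
    exact (Complex.continuous_conj.comp (coh_cont d ε)).measurable.mul (hg.comp measurable_snd)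
  exact this.integral_prod_right'.measurable

theorem res_id (d : ℕ) (ε : ℝ) (hε : 0 < ε) (g : Eu d → ℂ) (hg : Measurable g)
    (h : ∫⁻ x, ‖g x‖ₑ ^ 2 ≠ ⊤) :
    ∫⁻ z : Eu d × Eu d, CC d ε * ‖∫ x, conj (coh d ε z.1 z.2 x) * g x‖ₑ ^ 2 = ∫⁻ x, ‖g x‖ₑ ^ 2 := by
  have hm := amp_meas d ε g hg
  rw [Measure.volume_eq_prod, lintegral_prod _ ((hm.enorm.pow_const 2).const_mul _).aemeasurable]
  have hL := memLp2 hg.aestronglyMeasurable h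
  have : ∀ q : Eu d, ∫⁻ p : Eu d, CC d ε * ‖∫ x, conj (coh d ε q p x) * g x‖ₑ ^ 2
      = ∫⁻ x, ‖g x‖ₑ ^ 2 * ENNReal.ofReal (gau d ε (x - q) ^ 2) := by
    intro q
    rw [lintegral_const_mul]
    · simp_rw [coh_amp]
      rw [CC]
      refine (planch_eps d ε hε _ ((gau_memLp d ε hε q).integrable_mul hL) ?_).trans ?_
      · refine memLp2 (by fun_prop) ?_
        refine ne_top_of_le_ne_top (b := ENNReal.ofReal (((Real.pi * ε) ^ (-(d : ℝ) / 4)) ^ 2) * ∫⁻ x, ‖g x‖ₑ ^ 2)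
          (ENNReal.mul_ne_top (by simp) h) ?_
        rw [← lintegral_const_mul _ (by fun_prop)]
        refine lintegral_mono fun x => ?_
        rw [Pi.mul_apply, enorm_mul, mul_pow, enorm_gau_sq]
        have := gau_le d ε hε (x - q)
        have := gau_pos d ε hε (x - q)
        gcongr
      · refine lintegral_congr fun x => ?_
        rw [Pi.mul_apply, enorm_mul, mul_pow, enorm_gau_sq, mul_comm]
    · have := hm.comp (measurable_prodMk_left (x := q))
      simp only [Function.comp_def] at this
      fun_prop
  simp only
  simp_rw [this]
  rw [lintegral_lintegral_swap]
  · refine lintegral_congr fun x => ?_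
    rw [lintegral_const_mul _ (by fun_prop),
      lintegral_sub_left_eq_self (fun y => ENNReal.ofReal (gau d ε y ^ 2)) x, gau_moment0 d ε hε, mul_one]
  · fun_prop

theorem integrable_osc2 (d : ℕ) (ε : ℝ) (f : Eu d × Eu d → ℂ) (h1 : Integrable f) (p1 p2 : Eu d) :
    Integrable (fun X : Eu d × Eu d => osc d ε p1 X.1 * osc d ε p2 X.2 * f X) := by
  refine h1.bdd_mul (c := 1) ?_ (.of_forall fun X => ?_)
  · apply Continuous.aestronglyMeasurable
    unfold osc; fun_prop
  · rw [norm_mul, norm_osc, norm_osc]; norm_num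

theorem integrable_osc1 (d : ℕ) (ε : ℝ) (f : Eu d × Eu d → ℂ) (h1 : Integrable f) (p1 : Eu d) :
    Integrable (fun X : Eu d × Eu d => osc d ε p1 X.1 * f X) := by
  refine h1.bdd_mul (c := 1) ?_ (.of_forall fun X => ?_)
  · apply Continuous.aestronglyMeasurable
    unfold osc; fun_prop
  · rw [norm_osc]

theorem planch2 (d : ℕ) (ε : ℝ) (hε : 0 < ε) (f : Eu d × Eu d → ℂ) (hf : Measurable f)
    (h1 : Integrable f) :
    ∫⁻ P : Eu d × Eu d, CC d ε * CC d ε * ‖∫ X : Eu d × Eu d, osc d ε P.1 X.1 * osc d ε P.2 X.2 * f X‖ₑ ^ 2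
      ≤ ∫⁻ X, ‖f X‖ₑ ^ 2 := by
  have hg : Measurable (fun w : Eu d × Eu d => ∫ x1, osc d ε w.1 x1 * f (x1, w.2)) := by
    have : StronglyMeasurable (fun w : (Eu d × Eu d) × Eu d => osc d ε w.1.1 w.2 * f (w.2, w.1.2)) := by
      apply Measurable.stronglyMeasurable
      have : Measurable (fun w : (Eu d × Eu d) × Eu d => osc d ε w.1.1 w.2) := by
        apply Continuous.measurable; unfold osc; fun_prop
      fun_prop
    exact this.integral_prod_right'.measurable
  set g : Eu d → Eu d → ℂ := fun p1 x2 => ∫ x1, osc d ε p1 x1 * f (x1, x2) with hgdef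
  have hg1 : Measurable (Function.uncurry g) := hg
  have e : ∀ P : Eu d × Eu d, ∫ X : Eu d × Eu d, osc d ε P.1 X.1 * osc d ε P.2 X.2 * f X
      = ∫ x2, osc d ε P.2 x2 * g P.1 x2 := by
    intro P
    have := integrable_osc2 d ε f h1 P.1 P.2
    rw [Measure.volume_eq_prod] at this ⊢
    rw [integral_prod_symm _ this]
    refine integral_congr_ae (.of_forall fun x2 => ?_)
    simp only [hgdef]
    rw [← integral_const_mul]
    refine integral_congr_ae (.of_forall fun x1 => ?_)
    simp only
    ring
  simp_rw [e]
  have hm : Measurable (fun P : Eu d × Eu d => ∫ x2, osc d ε P.2 x2 * g P.1 x2) := by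
    have : StronglyMeasurable (fun w : (Eu d × Eu d) × Eu d => osc d ε w.1.2 w.2 * g w.1.1 w.2) := by
      apply Measurable.stronglyMeasurable
      have : Measurable (fun w : (Eu d × Eu d) × Eu d => osc d ε w.1.2 w.2) := by
        apply Continuous.measurable; unfold osc; fun_prop
      have : Measurable (fun w : (Eu d × Eu d) × Eu d => g w.1.1 w.2) :=
        hg1.comp (f := fun w : (Eu d × Eu d) × Eu d => (w.1.1, w.2)) (by fun_prop)
      fun_prop
    exact this.integral_prod_right'.measurable
  rw [Measure.volume_eq_prod, lintegral_prod _ ((hm.enorm.pow_const 2).const_mul _).aemeasurable]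
  calc ∫⁻ p1, ∫⁻ p2, CC d ε * CC d ε * ‖∫ x2, osc d ε p2 x2 * g p1 x2‖ₑ ^ 2
      = ∫⁻ p1, CC d ε * (CC d ε * ∫⁻ p2, ‖∫ x2, osc d ε p2 x2 * g p1 x2‖ₑ ^ 2) := by
        refine lintegral_congr fun p1 => ?_
        have := hm.comp (measurable_prodMk_left (x := p1))
        simp only [Function.comp_def] at this
        rw [lintegral_const_mul _ (by fun_prop), mul_assoc]
    _ ≤ ∫⁻ p1, CC d ε * ∫⁻ x2, ‖g p1 x2‖ₑ ^ 2 := by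
        refine lintegral_mono fun p1 => ?_
        gcongr
        apply planch_le d ε hε
        have := integrable_osc1 d ε f h1 p1
        rw [Measure.volume_eq_prod] at this
        exact this.integral_prod_right
    _ = ∫⁻ p1, ∫⁻ x2, CC d ε * ‖g p1 x2‖ₑ ^ 2 := by
        refine lintegral_congr fun p1 => ?_
        have := hg1.comp (measurable_prodMk_left (x := p1))
        simp only [Function.comp_def, Function.uncurry] at this
        rw [lintegral_const_mul _ (by fun_prop)]
    _ = ∫⁻ x2, ∫⁻ p1, CC d ε * ‖g p1 x2‖ₑ ^ 2 := by
        rw [lintegral_lintegral_swap]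
        have : Measurable (Function.uncurry fun p1 x2 => CC d ε * ‖g p1 x2‖ₑ ^ 2) := by
          simp only [Function.uncurry_def] at hg1 ⊢
          fun_prop
        exact this.aemeasurable
    _ ≤ ∫⁻ x2, ∫⁻ x1, ‖f (x1, x2)‖ₑ ^ 2 := by
        apply lintegral_mono_ae
        rw [Measure.volume_eq_prod] at h1
        filter_upwards [h1.prod_left_ae] with x2 hx2
        have := hg1.comp (measurable_prodMk_right (y := x2))
        simp only [Function.comp_def, Function.uncurry] at this
        rw [lintegral_const_mul _ (by fun_prop)]
        exact planch_le d ε hε _ hx2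
    _ = _ := by
        rw [lintegral_prod_symm' _ (by fun_prop)]

@[fun_prop]
theorem meas_conj {α : Type*} [MeasurableSpace α] {f : α → ℂ} (hf : Measurable f) :
    Measurable (fun x => conj (f x)) := Complex.continuous_conj.measurable.comp hf

theorem cs_sq {α : Type*} [MeasurableSpace α] {μ : Measure α} {f g : α → ℝ≥0∞}
    (hf : AEMeasurable f μ) (hg : AEMeasurable g μ) :
    (∫⁻ a, f a * g a ∂μ) ^ 2 ≤ (∫⁻ a, f a ^ 2 ∂μ) * ∫⁻ a, g a ^ 2 ∂μ := by
  have h := ENNReal.lintegral_mul_le_Lp_mul_Lq μ Real.HolderConjugate.two_two hf hg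
  simp only [Pi.mul_apply, ENNReal.rpow_ofNat] at h
  calc _ ≤ _ := pow_le_pow_left' h 2
    _ = _ := by
      rw [mul_pow, ← ENNReal.rpow_natCast, ← ENNReal.rpow_natCast, ← ENNReal.rpow_mul, ← ENNReal.rpow_mul]
      norm_num

section ker
variable {W : Type*} [MeasurableSpace W]

theorem ker_sq_le (ν : Measure W) [SFinite ν] (d : ℕ) (χ : Eu d → ℂ) (hχ : Measurable χ)
    (hχ1 : ∫⁻ x, ‖χ x‖ₑ ^ 2 ≤ 1) (ψ : Eu d × W → ℂ) (hψ : Measurable ψ)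
    (hψ1 : ∫⁻ X, ‖ψ X‖ₑ ^ 2 ∂(volume.prod ν) ≤ 1) :
    ∫⁻ w, (∫⁻ x, ‖conj (χ x) * ψ (x, w)‖ₑ) ^ 2 ∂ν ≤ 1 := by
  calc ∫⁻ w, (∫⁻ x, ‖conj (χ x) * ψ (x, w)‖ₑ) ^ 2 ∂ν ≤ ∫⁻ w, (∫⁻ x, ‖ψ (x, w)‖ₑ ^ 2) ∂ν := by
        refine lintegral_mono fun w => ?_
        simp only [enorm_mul, RCLike.enorm_conj]
        refine (cs_sq (by fun_prop) (by fun_prop)).trans ?_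
        exact mul_le_of_le_one_left' hχ1
    _ ≤ 1 := by
        rw [lintegral_prod_symm' (fun X => ‖ψ X‖ₑ ^ 2) (by fun_prop)] at hψ1
        exact hψ1

theorem ker_amp_le (ν : Measure W) [SFinite ν] (d : ℕ) (χ : Eu d → ℂ) (hχ : Measurable χ)
    (hχ1 : ∫⁻ x, ‖χ x‖ₑ ^ 2 ≤ 1) (ψ : Eu d × W → ℂ) (hψ : Measurable ψ)
    (hψ1 : ∫⁻ X, ‖ψ X‖ₑ ^ 2 ∂(volume.prod ν) ≤ 1) :
    ∫⁻ w, ‖∫ x, conj (χ x) * ψ (x, w)‖ₑ ^ 2 ∂ν ≤ 1 := by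
  refine (lintegral_mono fun w => ?_).trans (ker_sq_le ν d χ hχ hχ1 ψ hψ hψ1)
  exact pow_le_pow_left' (enorm_integral_le_lintegral_enorm _) 2

theorem ker_amp_meas (d : ℕ) (χ : Eu d → ℂ) (hχ : Measurable χ) (ψ : Eu d × W → ℂ) (hψ : Measurable ψ) :
    Measurable (fun w : W => ∫ x, conj (χ x) * ψ (x, w)) := by
  have : StronglyMeasurable (fun v : W × Eu d => conj (χ v.2) * ψ (v.2, v.1)) := by
    apply Measurable.stronglyMeasurable
    fun_prop
  exact this.integral_prod_right'.measurable

theorem ker_main (ν : Measure W) [SFinite ν] (d : ℕ) (χ : Eu d → ℂ) (hχ : Measurable χ)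
    (hχ1 : ∫⁻ x, ‖χ x‖ₑ ^ 2 ≤ 1) (lam : ℕ → ℝ) (hl : ∀ n, 0 ≤ lam n) (hs : Summable lam)
    (ψ : ℕ → Eu d × W → ℂ) (hψ : ∀ n, Measurable (ψ n))
    (hψ1 : ∀ n, ∫⁻ X, ‖ψ n X‖ₑ ^ 2 ∂(volume.prod ν) ≤ 1) :
    HasSum (fun n => ((lam n * (∫⁻ w, ‖∫ x, conj (χ x) * ψ n (x, w)‖ₑ ^ 2 ∂ν).toReal : ℝ) : ℂ))
      (∫ z : Eu d × Eu d, conj (χ z.1) * χ z.2 *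
        ∫ w, ∑' n, (lam n : ℂ) * ψ n (z.1, w) * conj (ψ n (z.2, w)) ∂ν) := by
  set F : ℕ → (Eu d × Eu d) × W → ℂ := fun n v =>
    (lam n : ℂ) * ((conj (χ v.1.1) * ψ n (v.1.1, v.2)) * conj (conj (χ v.1.2) * ψ n (v.1.2, v.2))) with hF
  have hFm : ∀ n, Measurable (F n) := by
    intro n; have := hψ n; simp only [hF]; fun_prop
  have hFn : ∀ n, ∫⁻ v, ‖F n v‖ₑ ∂((volume : Measure (Eu d × Eu d)).prod ν) ≤ ENNReal.ofReal (lam n) := by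
    intro n
    have hn := hψ n
    rw [lintegral_prod_symm' _ (hFm n).enorm]
    have : ∀ w, ∫⁻ z : Eu d × Eu d, ‖F n (z, w)‖ₑ =
        ENNReal.ofReal (lam n) * (∫⁻ x, ‖conj (χ x) * ψ n (x, w)‖ₑ) ^ 2 := by
      intro w
      have e : ∀ z : Eu d × Eu d, ‖F n (z, w)‖ₑ = ENNReal.ofReal (lam n) *
          (‖conj (χ z.1) * ψ n (z.1, w)‖ₑ * ‖conj (χ z.2) * ψ n (z.2, w)‖ₑ) := by
        intro z
        simp only [hF]
        rw [enorm_mul, enorm_mul, RCLike.enorm_conj (_ * _), ← ofReal_norm, Complex.norm_real,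
          Real.norm_of_nonneg (hl n)]
      simp_rw [e]
      rw [lintegral_const_mul _ (by fun_prop), Measure.volume_eq_prod,
        lintegral_prod_mul (f := fun x => ‖conj (χ x) * ψ n (x, w)‖ₑ)
          (g := fun x => ‖conj (χ x) * ψ n (x, w)‖ₑ) (Measurable.aemeasurable (by fun_prop))
          (Measurable.aemeasurable (by fun_prop)), sq]
    simp_rw [this]
    rw [lintegral_const_mul]
    · exact mul_le_of_le_one_right' (ker_sq_le ν d χ hχ hχ1 (ψ n) hn (hψ1 n))
    · apply Measurable.pow_const
      exact Measurable.lintegral_prod_right' (f := fun v : W × Eu d => ‖conj (χ v.2) * ψ n (v.2, v.1)‖ₑ)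
        (by fun_prop)
  have hFi : ∀ n, Integrable (F n) ((volume : Measure (Eu d × Eu d)).prod ν) := fun n =>
    ⟨(hFm n).aestronglyMeasurable, lt_of_le_of_lt (hFn n) ENNReal.ofReal_lt_top⟩
  have hsum : Summable fun n => ∫ v, ‖F n v‖ ∂((volume : Measure (Eu d × Eu d)).prod ν) := by
    refine hs.of_nonneg_of_le (fun n => integral_nonneg fun v => norm_nonneg _) fun n => ?_
    rw [integral_norm_eq_lintegral_enorm (hFi n).1]
    exact ENNReal.toReal_le_of_le_ofReal (hl n) (hFn n)
  have H := hasSum_integral_of_summable_integral_norm hFi hsum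
  have hT : Integrable (fun v => ∑' n, F n v) ((volume : Measure (Eu d × Eu d)).prod ν) := by
    refine ⟨(Measurable.tsum hFm).aestronglyMeasurable, ?_⟩
    refine lt_of_le_of_lt (lintegral_mono fun v => enorm_tsum_le_tsum_enorm) ?_
    rw [lintegral_tsum fun n => (hFm n).enorm.aemeasurable]
    refine lt_of_le_of_lt (ENNReal.tsum_le_tsum hFn) ?_
    rw [← ENNReal.ofReal_tsum_of_nonneg hl hs]
    exact ENNReal.ofReal_lt_top
  convert! H using 1
  · funext n
    have hn := hψ n
    rw [integral_prod_symm _ (hFi n)]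
    have : ∀ w, ∫ z : Eu d × Eu d, F n (z, w) =
        (lam n : ℂ) * ((‖∫ x, conj (χ x) * ψ n (x, w)‖ ^ 2 : ℝ) : ℂ) := by
      intro w
      simp only [hF]
      rw [integral_const_mul, Measure.volume_eq_prod,
        integral_prod_mul (fun x => conj (χ x) * ψ n (x, w)) (fun y => conj (conj (χ y) * ψ n (y, w))),
        integral_conj, Complex.mul_conj, Complex.normSq_eq_norm_sq]
    simp_rw [this]
    rw [integral_const_mul, integral_complex_ofReal, Complex.ofReal_mul]
    congr 2
    rw [integral_eq_lintegral_of_nonneg_ae (.of_forall fun w => by positivity)]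
    · congr 1
      refine lintegral_congr fun w => ?_
      rw [← ofReal_norm, ENNReal.ofReal_pow (norm_nonneg _)]
    · exact ((ker_amp_meas d χ hχ (ψ n) hn).norm.pow_const 2).aestronglyMeasurable
  · rw [integral_prod _ hT]
    refine integral_congr_ae (.of_forall fun z => ?_)
    simp only
    rw [← integral_const_mul]
    refine integral_congr_ae (.of_forall fun w => ?_)
    simp only
    rw [← tsum_mul_left]
    refine tsum_congr fun n => ?_
    simp only [hF, map_mul, Complex.conj_conj]
    ring

theorem ker_ennreal (ν : Measure W) [SFinite ν] (d : ℕ) (χ : Eu d → ℂ) (hχ : Measurable χ)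
    (hχ1 : ∫⁻ x, ‖χ x‖ₑ ^ 2 ≤ 1) (lam : ℕ → ℝ) (hl : ∀ n, 0 ≤ lam n) (hs : Summable lam)
    (ψ : ℕ → Eu d × W → ℂ) (hψ : ∀ n, Measurable (ψ n))
    (hψ1 : ∀ n, ∫⁻ X, ‖ψ n X‖ₑ ^ 2 ∂(volume.prod ν) ≤ 1) :
    ∑' n, ENNReal.ofReal (lam n) * ∫⁻ w, ‖∫ x, conj (χ x) * ψ n (x, w)‖ₑ ^ 2 ∂ν
     = ENNReal.ofReal (∫ z : Eu d × Eu d, conj (χ z.1) * χ z.2 *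
        ∫ w, ∑' n, (lam n : ℂ) * ψ n (z.1, w) * conj (ψ n (z.2, w)) ∂ν).re := by
  have H := Complex.hasSum_re (ker_main ν d χ hχ hχ1 lam hl hs ψ hψ hψ1)
  simp only [Complex.ofReal_re] at H
  rw [← H.tsum_eq, ENNReal.ofReal_tsum_of_nonneg (fun n => mul_nonneg (hl n) ENNReal.toReal_nonneg) H.summable]
  refine tsum_congr fun n => ?_
  rw [ENNReal.ofReal_mul (hl n), ENNReal.ofReal_toReal]
  exact ne_top_of_le_ne_top ENNReal.one_ne_top (ker_amp_le ν d χ hχ hχ1 (ψ n) (hψ n) (hψ1 n))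
end ker

theorem lint_of_orth {α : Type*} [MeasurableSpace α] (μ : Measure α) (φ : α → ℂ) (hm : Measurable φ)
    (h : ∫ x, conj (φ x) * φ x ∂μ = 1) : ∫⁻ x, ‖φ x‖ₑ ^ 2 ∂μ = 1 := by
  have e : ∀ x, conj (φ x) * φ x = ((‖φ x‖ ^ 2 : ℝ) : ℂ) := by
    intro x; rw [mul_comm, Complex.mul_conj, Complex.normSq_eq_norm_sq]
  simp_rw [e] at h
  rw [integral_complex_ofReal] at h
  have h' : ∫ x, ‖φ x‖ ^ 2 ∂μ = 1 := by exact_mod_cast h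
  rw [integral_eq_lintegral_of_nonneg_ae (.of_forall fun w => by positivity)
    (hm.norm.pow_const 2).aestronglyMeasurable] at h'
  have h2 := (ENNReal.toReal_eq_one_iff _).1 h'
  rw [← h2]
  refine lintegral_congr fun w => ?_
  rw [← ofReal_norm, ENNReal.ofReal_pow (norm_nonneg _)]

theorem coh_meas (d : ℕ) (ε : ℝ) (q p : Eu d) : Measurable (coh d ε q p) := by
  apply Continuous.measurable; unfold coh; fun_prop

theorem coh_norm_sq (d : ℕ) (ε : ℝ) (hε : 0 < ε) (q p : Eu d) :
    ∫⁻ x, ‖coh d ε q p x‖ₑ ^ 2 = 1 := by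
  have e : ∀ x, ‖coh d ε q p x‖ₑ ^ 2 = ENNReal.ofReal (gau d ε (x - q) ^ 2) := by
    intro x
    rw [← RCLike.enorm_conj, conj_coh, enorm_mul, mul_pow, enorm_gau_sq, ← ofReal_norm, norm_osc]
    simp
  simp_rw [e]
  rw [lintegral_sub_right_eq_self (fun y => ENNReal.ofReal (gau d ε y ^ 2)), gau_moment0 d ε hε]

/-- the Husimi function of the `φ` side equals the one of a coupling side -/
theorem husimi_eq (d : ℕ) (ε : ℝ) (hε : 0 < ε) (lam : ℕ → ℝ) (hl : ∀ n, 0 ≤ lam n) (hs : ∑' n, lam n = 1)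
    (φ : ℕ → Eu d → ℂ) (hm : ∀ n, Measurable (φ n)) (h1 : ∀ n, ∫⁻ x, ‖φ n x‖ₑ ^ 2 ≤ 1)
    (lam' : ℕ → ℝ) (hl' : ∀ n, 0 ≤ lam' n) (hs' : ∑' n, lam' n = 1)
    (ψ : ℕ → Eu d × Eu d → ℂ) (hψ : ∀ n, Measurable (ψ n))
    (hψ1 : ∀ n, ∫⁻ X, ‖ψ n X‖ₑ ^ 2 ≤ 1)
    (hk : ∀ x y, ∫ w, ∑' n, (lam' n : ℂ) * ψ n (x, w) * conj (ψ n (y, w)) = densKernel d lam φ x y)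
    (z : Eu d × Eu d) :
    ENNReal.ofReal (husimi d ε lam φ z) =
      CC d ε * ∑' n, ENNReal.ofReal (lam' n) * ∫⁻ w, ‖∫ x, conj (coh d ε z.1 z.2 x) * ψ n (x, w)‖ₑ ^ 2 := by
  have sm : Summable lam := by
    by_contra h; rw [tsum_eq_zero_of_not_summable h] at hs; norm_num at hs
  have sm' : Summable lam' := by
    by_contra h; rw [tsum_eq_zero_of_not_summable h] at hs'; norm_num at hs'
  have hχ := coh_meas d ε z.1 z.2
  have hχ1 := (coh_norm_sq d ε hε z.1 z.2).le
  rw [ker_ennreal volume d _ hχ hχ1 lam' hl' sm' ψ hψ hψ1]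
  simp_rw [hk]
  have hφ2 : ∀ n, ∫⁻ X : Eu d × Unit, ‖φ n X.1‖ₑ ^ 2 ∂(volume.prod (Measure.dirac ())) ≤ 1 := by
    intro n
    have := hm n
    rw [lintegral_prod _ (by fun_prop)]
    simpa using h1 n
  have hφm : ∀ n, Measurable (fun X : Eu d × Unit => φ n X.1) := fun n => (hm n).comp measurable_fst
  have M := ker_main (Measure.dirac ()) d _ hχ hχ1 lam hl sm (fun n X => φ n X.1) hφm hφ2
  simp only [integral_dirac, lintegral_dirac] at M
  have H := Complex.hasSum_re M
  simp only [Complex.ofReal_re] at H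
  unfold husimi CC
  rw [ENNReal.ofReal_mul (by positivity)]
  congr 2
  simp only [densKernel]
  rw [← H.tsum_eq]
  refine tsum_congr fun n => ?_
  rw [ENNReal.toReal_pow, toReal_enorm, Complex.normSq_eq_norm_sq]

/-- product Gaussian -/
def GG (d : ℕ) (ε : ℝ) (Q X : Eu d × Eu d) : ℝ := gau d ε (X.1 - Q.1) * gau d ε (X.2 - Q.2)

/-- amplitude on a product coherent state -/
def Amp (d : ℕ) (ε : ℝ) (ψ : Eu d × Eu d → ℂ) (Z : (Eu d × Eu d) × (Eu d × Eu d)) : ℂ :=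
  ∫ X : Eu d × Eu d, conj (coh d ε Z.1.1 Z.1.2 X.1) * (conj (coh d ε Z.2.1 Z.2.2 X.2) * ψ X)

theorem GG_cont (d : ℕ) (ε : ℝ) (Q : Eu d × Eu d) : Continuous (GG d ε Q) := by
  unfold GG; fun_prop

theorem enorm_GG_sq (d : ℕ) (ε : ℝ) (Q X : Eu d × Eu d) :
    ‖(GG d ε Q X : ℂ)‖ₑ ^ 2 = ENNReal.ofReal ((gau d ε (X.1 - Q.1) * gau d ε (X.2 - Q.2)) ^ 2) := by
  rw [← ofReal_norm, ← ENNReal.ofReal_pow (norm_nonneg _), Complex.norm_real, Real.norm_eq_abs, sq_abs, GG]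

theorem GG_lint (d : ℕ) (ε : ℝ) (hε : 0 < ε) (Q : Eu d × Eu d) :
    ∫⁻ X, ‖(GG d ε Q X : ℂ)‖ₑ ^ 2 = 1 := by
  have e : ∀ X : Eu d × Eu d, ‖(GG d ε Q X : ℂ)‖ₑ ^ 2 =
      ENNReal.ofReal (gau d ε (X.1 - Q.1) ^ 2) * ENNReal.ofReal (gau d ε (X.2 - Q.2) ^ 2) := by
    intro X
    rw [enorm_GG_sq, mul_pow, ENNReal.ofReal_mul (sq_nonneg _)]
  simp_rw [e]
  rw [Measure.volume_eq_prod, lintegral_prod_mul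
    (f := fun x => ENNReal.ofReal (gau d ε (x - Q.1) ^ 2))
    (g := fun x => ENNReal.ofReal (gau d ε (x - Q.2) ^ 2))
    (Measurable.aemeasurable (by fun_prop)) (Measurable.aemeasurable (by fun_prop))]
  rw [lintegral_sub_right_eq_self (fun y => ENNReal.ofReal (gau d ε y ^ 2)),
    lintegral_sub_right_eq_self (fun y => ENNReal.ofReal (gau d ε y ^ 2))]
  simp only [gau_moment0 d ε hε, mul_one]

theorem GG_memLp (d : ℕ) (ε : ℝ) (hε : 0 < ε) (Q : Eu d × Eu d) :
    MemLp (fun X => (GG d ε Q X : ℂ)) 2 := by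
  apply memLp2
  · exact (Complex.continuous_ofReal.comp (GG_cont d ε Q)).aestronglyMeasurable
  · rw [GG_lint d ε hε]; norm_num

theorem GG_mul_int (d : ℕ) (ε : ℝ) (hε : 0 < ε) (Q : Eu d × Eu d) (ψ : Eu d × Eu d → ℂ)
    (hψ : MemLp ψ 2) : Integrable (fun X => (GG d ε Q X : ℂ) * ψ X) :=
  (GG_memLp d ε hε Q).integrable_mul hψ

theorem amp_eq_osc (d : ℕ) (ε : ℝ) (ψ : Eu d × Eu d → ℂ) (Q P : Eu d × Eu d) :
    Amp d ε ψ ((Q.1, P.1), (Q.2, P.2)) =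
      ∫ X : Eu d × Eu d, osc d ε P.1 X.1 * osc d ε P.2 X.2 * ((GG d ε Q X : ℂ) * ψ X) := by
  unfold Amp GG
  refine integral_congr_ae (.of_forall fun X => ?_)
  simp only [conj_coh]
  push_cast
  ring

theorem amp_integrable (d : ℕ) (ε : ℝ) (hε : 0 < ε) (ψ : Eu d × Eu d → ℂ) (hψ : MemLp ψ 2)
    (Z : (Eu d × Eu d) × (Eu d × Eu d)) :
    Integrable (fun X : Eu d × Eu d =>
      conj (coh d ε Z.1.1 Z.1.2 X.1) * (conj (coh d ε Z.2.1 Z.2.2 X.2) * ψ X)) := by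
  refine (integrable_osc2 d ε _ (GG_mul_int d ε hε (Z.1.1, Z.2.1) ψ hψ) Z.1.2 Z.2.2).congr
    (.of_forall fun X => ?_)
  simp only [conj_coh, GG]
  push_cast
  ring

theorem Amp_meas (d : ℕ) (ε : ℝ) (ψ : Eu d × Eu d → ℂ) (hψ : Measurable ψ) :
    Measurable (Amp d ε ψ) := by
  have h1 : Measurable (fun w : ((Eu d × Eu d) × (Eu d × Eu d)) × (Eu d × Eu d) =>
      coh d ε w.1.1.1 w.1.1.2 w.2.1) :=
    (coh_cont d ε).measurable.comp (f := fun w : ((Eu d × Eu d) × (Eu d × Eu d)) × (Eu d × Eu d) =>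
      (w.1.1, w.2.1)) (by fun_prop)
  have h2 : Measurable (fun w : ((Eu d × Eu d) × (Eu d × Eu d)) × (Eu d × Eu d) =>
      coh d ε w.1.2.1 w.1.2.2 w.2.2) :=
    (coh_cont d ε).measurable.comp (f := fun w : ((Eu d × Eu d) × (Eu d × Eu d)) × (Eu d × Eu d) =>
      (w.1.2, w.2.2)) (by fun_prop)
  have : StronglyMeasurable (fun w : ((Eu d × Eu d) × (Eu d × Eu d)) × (Eu d × Eu d) =>
      conj (coh d ε w.1.1.1 w.1.1.2 w.2.1) * (conj (coh d ε w.1.2.1 w.1.2.2 w.2.2) * ψ w.2)) := by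
    apply Measurable.stronglyMeasurable
    exact (meas_conj h1).mul ((meas_conj h2).mul (hψ.comp measurable_snd))
  exact this.integral_prod_right'.measurable

theorem amp_fubini (d : ℕ) (ε : ℝ) (hε : 0 < ε) (ψ : Eu d × Eu d → ℂ) (hψ : MemLp ψ 2)
    (z1 z2 : Eu d × Eu d) :
    Amp d ε ψ (z1, z2) = ∫ w, conj (coh d ε z2.1 z2.2 w) * ∫ x, conj (coh d ε z1.1 z1.2 x) * ψ (x, w) := by
  unfold Amp
  have h := amp_integrable d ε hε ψ hψ (z1, z2)
  rw [Measure.volume_eq_prod] at h ⊢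
  rw [integral_prod_symm _ h]
  refine integral_congr_ae (.of_forall fun w => ?_)
  simp only
  rw [← integral_const_mul]
  refine integral_congr_ae (.of_forall fun x => ?_)
  simp only
  ring

theorem marg_fst (d : ℕ) (ε : ℝ) (hε : 0 < ε) (ψ : Eu d × Eu d → ℂ) (hm : Measurable ψ)
    (h1 : ∫⁻ X, ‖ψ X‖ₑ ^ 2 ≤ 1) (z1 : Eu d × Eu d) :
    ∫⁻ z2, CC d ε * CC d ε * ‖Amp d ε ψ (z1, z2)‖ₑ ^ 2 =
      CC d ε * ∫⁻ w, ‖∫ x, conj (coh d ε z1.1 z1.2 x) * ψ (x, w)‖ₑ ^ 2 := by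
  have hψ : MemLp ψ 2 := memLp2 hm.aestronglyMeasurable (ne_top_of_le_ne_top ENNReal.one_ne_top h1)
  have hχ := coh_meas d ε z1.1 z1.2
  have hg := ker_amp_meas d _ hχ ψ hm
  have hl := ker_amp_le volume d _ hχ (coh_norm_sq d ε hε z1.1 z1.2).le ψ hm h1
  rw [← res_id d ε hε _ hg (ne_top_of_le_ne_top ENNReal.one_ne_top hl)]
  rw [← lintegral_const_mul _ (((amp_meas d ε _ hg).enorm.pow_const 2).const_mul _)]
  refine lintegral_congr fun z2 => ?_
  rw [amp_fubini d ε hε ψ hψ, mul_assoc]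

theorem amp_swap (d : ℕ) (ε : ℝ) (ψ : Eu d × Eu d → ℂ) (z1 z2 : Eu d × Eu d) :
    Amp d ε ψ (z1, z2) = Amp d ε (fun X => ψ X.swap) (z2, z1) := by
  unfold Amp
  rw [Measure.volume_eq_prod, ← (Measure.measurePreserving_swap (μ := (volume : Measure (Eu d))) (ν := (volume : Measure (Eu d)))).integral_comp
    MeasurableEquiv.prodComm.measurableEmbedding]
  refine integral_congr_ae (.of_forall fun x => ?_)
  simp only [Prod.fst_swap, Prod.snd_swap]
  ring

theorem lint_swap (d : ℕ) (f : Eu d × Eu d → ℝ≥0∞) :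
    ∫⁻ X : Eu d × Eu d, f X.swap = ∫⁻ X, f X := by
  exact (Measure.measurePreserving_swap (μ := (volume : Measure (Eu d))) (ν := (volume : Measure (Eu d)))).lintegral_comp_emb
    MeasurableEquiv.prodComm.measurableEmbedding f

/-- the density of the classical coupling -/
def dens (d : ℕ) (ε : ℝ) (lam : ℕ → ℝ) (ψ : ℕ → Eu d × Eu d → ℂ)
    (Z : (Eu d × Eu d) × (Eu d × Eu d)) : ℝ≥0∞ :=
  ∑' n, ENNReal.ofReal (lam n) * (CC d ε * CC d ε * ‖Amp d ε (ψ n) Z‖ₑ ^ 2)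

theorem dens_term_meas (d : ℕ) (ε : ℝ) (ψ : Eu d × Eu d → ℂ) (hm : Measurable ψ) :
    Measurable (fun Z => CC d ε * CC d ε * ‖Amp d ε ψ Z‖ₑ ^ 2) :=
  ((Amp_meas d ε ψ hm).enorm.pow_const 2).const_mul _

theorem dens_meas (d : ℕ) (ε : ℝ) (lam : ℕ → ℝ) (ψ : ℕ → Eu d × Eu d → ℂ) (hm : ∀ n, Measurable (ψ n)) :
    Measurable (dens d ε lam ψ) :=
  Measurable.tsum fun n => (dens_term_meas d ε (ψ n) (hm n)).const_mul _

theorem dens_fst (d : ℕ) (ε : ℝ) (hε : 0 < ε) (lam : ℕ → ℝ)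
    (ψ : ℕ → Eu d × Eu d → ℂ) (hm : ∀ n, Measurable (ψ n)) (h1 : ∀ n, ∫⁻ X, ‖ψ n X‖ₑ ^ 2 ≤ 1)
    (z1 : Eu d × Eu d) :
    ∫⁻ z2, dens d ε lam ψ (z1, z2) = CC d ε * ∑' n, ENNReal.ofReal (lam n) *
      ∫⁻ w, ‖∫ x, conj (coh d ε z1.1 z1.2 x) * ψ n (x, w)‖ₑ ^ 2 := by
  unfold dens
  have ht : ∀ n, Measurable (fun z2 => CC d ε * CC d ε * ‖Amp d ε (ψ n) (z1, z2)‖ₑ ^ 2) := fun n =>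
    (dens_term_meas d ε (ψ n) (hm n)).comp (measurable_const.prodMk measurable_id)
  rw [lintegral_tsum fun n => ((ht n).const_mul _).aemeasurable, ← ENNReal.tsum_mul_left]
  refine tsum_congr fun n => ?_
  rw [lintegral_const_mul _ (ht n), marg_fst d ε hε (ψ n) (hm n) (h1 n), mul_left_comm]

theorem dens_swap (d : ℕ) (ε : ℝ) (lam : ℕ → ℝ) (ψ : ℕ → Eu d × Eu d → ℂ) (z1 z2 : Eu d × Eu d) :
    dens d ε lam ψ (z1, z2) = dens d ε lam (fun n X => ψ n X.swap) (z2, z1) := by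
  unfold dens
  refine tsum_congr fun n => ?_
  rw [amp_swap]

theorem map_fst_wd {α β : Type*} [MeasurableSpace α] [MeasurableSpace β] (μ : Measure α) (ν : Measure β)
    [SFinite μ] [SFinite ν] (f : α × β → ℝ≥0∞) (hf : Measurable f) (g : α → ℝ≥0∞)
    (h : ∀ x, ∫⁻ y, f (x, y) ∂ν = g x) :
    Measure.map Prod.fst ((μ.prod ν).withDensity f) = μ.withDensity g := by
  ext s hs
  rw [Measure.map_apply measurable_fst hs, withDensity_apply _ (measurable_fst hs), withDensity_apply _ hs,
    ← lintegral_indicator (measurable_fst hs), lintegral_prod _ (hf.indicator (measurable_fst hs)).aemeasurable,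
    ← lintegral_indicator hs]
  refine lintegral_congr fun x => ?_
  by_cases hx : x ∈ s
  · simp [Set.indicator, hx, h]
  · simp [Set.indicator, hx]

theorem map_snd_wd {α β : Type*} [MeasurableSpace α] [MeasurableSpace β] (μ : Measure α) (ν : Measure β)
    [SFinite μ] [SFinite ν] (f : α × β → ℝ≥0∞) (hf : Measurable f) (g : β → ℝ≥0∞)
    (h : ∀ y, ∫⁻ x, f (x, y) ∂μ = g y) :
    Measure.map Prod.snd ((μ.prod ν).withDensity f) = ν.withDensity g := by
  ext s hs
  rw [Measure.map_apply measurable_snd hs, withDensity_apply _ (measurable_snd hs), withDensity_apply _ hs,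
    ← lintegral_indicator (measurable_snd hs), lintegral_prod_symm _ (hf.indicator (measurable_snd hs)).aemeasurable,
    ← lintegral_indicator hs]
  refine lintegral_congr fun x => ?_
  by_cases hx : x ∈ s
  · simp [Set.indicator, hx, h]
  · simp [Set.indicator, hx]

theorem total_one (d : ℕ) (ε : ℝ) (hε : 0 < ε) (ψ : Eu d × Eu d → ℂ) (hm : Measurable ψ)
    (h1 : ∫⁻ X, ‖ψ X‖ₑ ^ 2 = 1) :
    ∫⁻ Z, CC d ε * CC d ε * ‖Amp d ε ψ Z‖ₑ ^ 2 = 1 := by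
  rw [Measure.volume_eq_prod, lintegral_prod _ (dens_term_meas d ε ψ hm).aemeasurable]
  simp_rw [marg_fst d ε hε ψ hm h1.le]
  have hm2 : Measurable (fun v : (Eu d × Eu d) × Eu d =>
      CC d ε * ‖∫ x, conj (coh d ε v.1.1 v.1.2 x) * ψ (x, v.2)‖ₑ ^ 2) := by
    refine Measurable.const_mul (Measurable.pow_const (Measurable.enorm ?_) _) _
    have : StronglyMeasurable (fun w : ((Eu d × Eu d) × Eu d) × Eu d =>
        conj (coh d ε w.1.1.1 w.1.1.2 w.2) * ψ (w.2, w.1.2)) := by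
      apply Measurable.stronglyMeasurable
      refine (meas_conj ((coh_cont d ε).measurable.comp (f := fun w : ((Eu d × Eu d) × Eu d) × Eu d =>
        (w.1.1, w.2)) (by fun_prop))).mul (hm.comp (by fun_prop))
    exact this.integral_prod_right'.measurable
  have e : ∀ z1 : Eu d × Eu d, CC d ε * ∫⁻ w, ‖∫ x, conj (coh d ε z1.1 z1.2 x) * ψ (x, w)‖ₑ ^ 2
      = ∫⁻ w, CC d ε * ‖∫ x, conj (coh d ε z1.1 z1.2 x) * ψ (x, w)‖ₑ ^ 2 := by
    intro z1
    rw [lintegral_const_mul]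
    exact (ker_amp_meas d _ (coh_meas d ε z1.1 z1.2) ψ hm).enorm.pow_const 2
  simp_rw [e]
  rw [lintegral_lintegral_swap hm2.aemeasurable]
  have hsl : ∫⁻ w, ∫⁻ x, ‖ψ (x, w)‖ₑ ^ 2 = 1 := by
    rw [← h1, Measure.volume_eq_prod, lintegral_prod_symm' _ (by fun_prop)]
  rw [← hsl]
  refine lintegral_congr_ae ?_
  have hfin : ∀ᵐ w : Eu d, ∫⁻ x : Eu d, ‖ψ (x, w)‖ₑ ^ 2 < ⊤ := by
    apply ae_lt_top
    · exact Measurable.lintegral_prod_left' (f := fun X : Eu d × Eu d => ‖ψ X‖ₑ ^ 2) (by fun_prop)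
    · rw [hsl]; norm_num
  filter_upwards [hfin] with w hw
  exact res_id d ε hε (fun x => ψ (x, w)) (by fun_prop) hw.ne

theorem reorder (d : ℕ) (F : (Eu d × Eu d) × (Eu d × Eu d) → ℝ≥0∞) (hF : Measurable F) :
    ∫⁻ Z, F Z = ∫⁻ Q : Eu d × Eu d, ∫⁻ P : Eu d × Eu d, F ((Q.1, P.1), (Q.2, P.2)) := by
  have e1 : ∫⁻ Z, F Z = ∫⁻ q1 : Eu d, ∫⁻ p1 : Eu d, ∫⁻ q2 : Eu d, ∫⁻ p2 : Eu d, F ((q1, p1), (q2, p2)) := by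
    rw [Measure.volume_eq_prod, lintegral_prod _ hF.aemeasurable, Measure.volume_eq_prod,
      lintegral_prod _ (Measurable.lintegral_prod_right' hF).aemeasurable]
    refine lintegral_congr fun q1 => lintegral_congr fun p1 => ?_
    rw [lintegral_prod]
    exact Measurable.aemeasurable (by fun_prop)
  have e2 : ∫⁻ Q : Eu d × Eu d, ∫⁻ P : Eu d × Eu d, F ((Q.1, P.1), (Q.2, P.2))
      = ∫⁻ q1 : Eu d, ∫⁻ q2 : Eu d, ∫⁻ p1 : Eu d, ∫⁻ p2 : Eu d, F ((q1, p1), (q2, p2)) := by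
    have hF' : Measurable (fun v : (Eu d × Eu d) × (Eu d × Eu d) => F ((v.1.1, v.2.1), (v.1.2, v.2.2))) := by
      fun_prop
    rw [Measure.volume_eq_prod, lintegral_prod _ (Measurable.lintegral_prod_right' hF').aemeasurable]
    refine lintegral_congr fun q1 => lintegral_congr fun q2 => ?_
    rw [lintegral_prod]
    exact Measurable.aemeasurable (by fun_prop)
  rw [e1, e2]
  refine lintegral_congr fun q1 => ?_
  rw [lintegral_lintegral_swap]
  apply Measurable.aemeasurable
  exact Measurable.lintegral_prod_right' (f := fun v : (Eu d × Eu d) × Eu d => F ((q1, v.1.1), (v.1.2, v.2)))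
    (by fun_prop)

/-- difference of the `i`-th coordinates -/
def yy (d : ℕ) (i : Fin d) (X : Eu d × Eu d) : ℝ := X.1 i - X.2 i

@[fun_prop]
theorem yy_cont (d : ℕ) (i : Fin d) : Continuous (yy d i) := by
  unfold yy; fun_prop

theorem cost_common (d : ℕ) (ε : ℝ) (hε : 0 < ε) (i : Fin d) (ψ a b : Eu d × Eu d → ℂ)
    (hψ : Measurable ψ) (ha : Measurable a) (hb : Measurable b)
    (w : (Eu d × Eu d) × (Eu d × Eu d) → ℝ) (hw : Measurable w)
    (hi : ∀ Q, Integrable (fun X => (GG d ε Q X : ℂ) * (a X + (yy d i (X - Q) : ℂ) * b X)))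
    (h : ∀ Q P : Eu d × Eu d, (w ((Q.1, P.1), (Q.2, P.2)) : ℂ) * Amp d ε ψ ((Q.1, P.1), (Q.2, P.2)) =
      ∫ X : Eu d × Eu d, osc d ε P.1 X.1 * osc d ε P.2 X.2 *
        ((GG d ε Q X : ℂ) * (a X + (yy d i (X - Q) : ℂ) * b X))) :
    ∫⁻ Z, ENNReal.ofReal (w Z ^ 2) * (CC d ε * CC d ε * ‖Amp d ε ψ Z‖ₑ ^ 2)
      ≤ (∫⁻ X, ‖a X‖ₑ ^ 2) + ENNReal.ofReal ε * ∫⁻ X, ‖b X‖ₑ ^ 2 := by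
  have hA := dens_term_meas d ε ψ hψ
  rw [reorder d _ (by fun_prop)]
  have key : ∀ Q P : Eu d × Eu d, ENNReal.ofReal (w ((Q.1, P.1), (Q.2, P.2)) ^ 2) *
      (CC d ε * CC d ε * ‖Amp d ε ψ ((Q.1, P.1), (Q.2, P.2))‖ₑ ^ 2) =
      CC d ε * CC d ε * ‖∫ X : Eu d × Eu d, osc d ε P.1 X.1 * osc d ε P.2 X.2 *
        ((GG d ε Q X : ℂ) * (a X + (yy d i (X - Q) : ℂ) * b X))‖ₑ ^ 2 := by
    intro Q P
    rw [← h, enorm_mul, mul_pow, ← ofReal_norm (w _ : ℂ), Complex.norm_real, Real.norm_eq_abs,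
      ← ENNReal.ofReal_pow (abs_nonneg _), sq_abs]
    ring
  simp_rw [key]
  have hGm : Measurable (fun v : (Eu d × Eu d) × (Eu d × Eu d) => GG d ε v.1 v.2) := by
    apply Continuous.measurable; unfold GG; fun_prop
  have hJ : Measurable (fun v : (Eu d × Eu d) × (Eu d × Eu d) =>
      (GG d ε v.1 v.2 : ℂ) * (a v.2 + (yy d i (v.2 - v.1) : ℂ) * b v.2)) := by
    have : Measurable (fun v : (Eu d × Eu d) × (Eu d × Eu d) => (yy d i (v.2 - v.1))) := by
      apply Continuous.measurable; fun_prop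
    fun_prop
  calc _ ≤ ∫⁻ Q, ∫⁻ X, ‖(GG d ε Q X : ℂ) * (a X + (yy d i (X - Q) : ℂ) * b X)‖ₑ ^ 2 := by
        refine lintegral_mono fun Q => ?_
        have hJQ : Measurable (fun X => (GG d ε Q X : ℂ) * (a X + (yy d i (X - Q) : ℂ) * b X)) :=
          hJ.comp (g := fun v : (Eu d × Eu d) × (Eu d × Eu d) =>
            (GG d ε v.1 v.2 : ℂ) * (a v.2 + (yy d i (v.2 - v.1) : ℂ) * b v.2))
            (f := fun X => (Q, X)) (by fun_prop)
        exact planch2 d ε hε _ hJQ (hi Q)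
    _ = ∫⁻ X, ∫⁻ Q, ‖(GG d ε Q X : ℂ) * (a X + (yy d i (X - Q) : ℂ) * b X)‖ₑ ^ 2 := by
        rw [lintegral_lintegral_swap]
        exact (hJ.enorm.pow_const 2).aemeasurable
    _ = ∫⁻ X, (‖a X‖ₑ ^ 2 + ENNReal.ofReal ε * ‖b X‖ₑ ^ 2) := by
        refine lintegral_congr fun X => ?_
        rw [← moment_two_sub d ε hε i (a X) (b X) X]
        refine lintegral_congr fun Q => ?_
        rw [enorm_mul, mul_pow, enorm_GG_sq, mul_comm]
        rfl
    _ = _ := by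
        rw [lintegral_add_left (by fun_prop), lintegral_const_mul _ (by fun_prop)]

theorem cost_Q (d : ℕ) (ε : ℝ) (hε : 0 < ε) (i : Fin d) (ψ : Eu d × Eu d → ℂ)
    (hψ : Measurable ψ) (h1 : ∫⁻ X, ‖ψ X‖ₑ ^ 2 = 1) :
    ∫⁻ Z : (Eu d × Eu d) × (Eu d × Eu d), ENNReal.ofReal ((Z.1.1 i - Z.2.1 i) ^ 2) *
        (CC d ε * CC d ε * ‖Amp d ε ψ Z‖ₑ ^ 2)
      ≤ (∫⁻ X, ‖Qop d i ψ X‖ₑ ^ 2) + ENNReal.ofReal ε := by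
  have hL : MemLp ψ 2 := memLp2 hψ.aestronglyMeasurable (by rw [h1]; norm_num)
  have e : ∀ Q X : Eu d × Eu d, (GG d ε Q X : ℂ) * (Qop d i ψ X + (yy d i (X - Q) : ℂ) * (-ψ X)) =
      ((Q.1 i - Q.2 i : ℝ) : ℂ) * ((GG d ε Q X : ℂ) * ψ X) := by
    intro Q X
    simp only [Qop, yy, Prod.fst_sub, Prod.snd_sub, PiLp.sub_apply]
    push_cast
    ring
  have := cost_common d ε hε i ψ (Qop d i ψ) (fun X => - ψ X) hψ (by unfold Qop; fun_prop) (by fun_prop)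
    (fun Z => Z.1.1 i - Z.2.1 i) (by fun_prop) (fun Q => by
      simp_rw [e]
      exact (GG_mul_int d ε hε Q ψ hL).const_mul _) (fun Q P => by
      simp_rw [e]
      rw [amp_eq_osc, ← integral_const_mul]
      refine integral_congr_ae (.of_forall fun X => ?_)
      simp only
      ring)
  simpa only [enorm_neg, h1, mul_one] using this

theorem yG_memLp (d : ℕ) (ε : ℝ) (hε : 0 < ε) (i : Fin d) (Q : Eu d × Eu d) :
    MemLp (fun X => (yy d i (X - Q) : ℂ) * (GG d ε Q X : ℂ)) 2 := by
  have hG := GG_cont d ε Q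
  apply memLp2
  · apply Continuous.aestronglyMeasurable
    fun_prop
  · have := moment_two_sub' d ε hε i 0 1 Q
    have e : ∀ X, ‖(yy d i (X - Q) : ℂ) * (GG d ε Q X : ℂ)‖ₑ ^ 2 =
        ‖(0:ℂ) + (((X.1 - Q.1) i - (X.2 - Q.2) i : ℝ) : ℂ) * 1‖ₑ ^ 2 *
        ENNReal.ofReal ((gau d ε (X.1 - Q.1) * gau d ε (X.2 - Q.2)) ^ 2) := by
      intro X
      rw [enorm_mul, mul_pow, enorm_GG_sq, zero_add, mul_one]
      rfl
    simp_rw [e]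
    rw [this]
    simp

/-- direction of derivation -/
def vv (d : ℕ) (i : Fin d) : Eu d × Eu d := (EuclideanSpace.single i 1, - EuclideanSpace.single i 1)

theorem osc_deriv (d : ℕ) (ε : ℝ) (i : Fin d) (P X : Eu d × Eu d) :
    HasLineDerivAt ℝ (fun X : Eu d × Eu d => osc d ε P.1 X.1 * osc d ε P.2 X.2)
      (-(Complex.I / ε) * ((P.1 i - P.2 i : ℝ) : ℂ) * (osc d ε P.1 X.1 * osc d ε P.2 X.2)) X (vv d i) := by
  unfold HasLineDerivAt
  have e : (fun t : ℝ => osc d ε P.1 (X + t • vv d i).1 * osc d ε P.2 (X + t • vv d i).2) =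
      fun t : ℝ => (osc d ε P.1 X.1 * osc d ε P.2 X.2) *
        Complex.exp ((t : ℂ) * (-(Complex.I / ε) * ((P.1 i - P.2 i : ℝ) : ℂ))) := by
    funext t
    have h1 : ⟪P.1, (X + t • vv d i).1⟫ = ⟪P.1, X.1⟫ + t * P.1 i := by
      simp [vv, inner_add_right, inner_smul_right, EuclideanSpace.inner_single_right]
    have h2 : ⟪P.2, (X + t • vv d i).2⟫ = ⟪P.2, X.2⟫ - t * P.2 i := by
      simp [vv, inner_add_right, inner_smul_right, EuclideanSpace.inner_single_right, inner_neg_right]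
      ring
    unfold osc
    rw [h1, h2, ← Complex.exp_add, ← Complex.exp_add, ← Complex.exp_add]
    congr 1
    push_cast
    ring
  rw [e]
  have h3 : HasDerivAt (fun t : ℝ => (t : ℂ) * (-(Complex.I / ε) * ((P.1 i - P.2 i : ℝ) : ℂ)))
      (1 * (-(Complex.I / ε) * ((P.1 i - P.2 i : ℝ) : ℂ))) 0 :=
    (Complex.ofRealCLM.hasDerivAt).mul_const _
  have h4 := (h3.cexp).const_mul (osc d ε P.1 X.1 * osc d ε P.2 X.2)
  convert! h4 using 1
  simp
  ring

theorem GG_deriv (d : ℕ) (ε : ℝ) (i : Fin d) (Q X : Eu d × Eu d) :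
    HasLineDerivAt ℝ (fun X : Eu d × Eu d => (GG d ε Q X : ℂ))
      (-(1 / ε) * (yy d i (X - Q) : ℂ) * (GG d ε Q X : ℂ)) X (vv d i) := by
  unfold HasLineDerivAt
  have e : ∀ t : ℝ, GG d ε Q (X + t • vv d i) =
      GG d ε Q X * Real.exp (-(t * yy d i (X - Q) + t ^ 2) / ε) := by
    intro t
    have h1 : ‖(X + t • vv d i).1 - Q.1‖ ^ 2 = ‖X.1 - Q.1‖ ^ 2 + 2 * (t * (X.1 - Q.1) i) + t ^ 2 := by
      have : (X + t • vv d i).1 - Q.1 = (X.1 - Q.1) + t • EuclideanSpace.single i (1:ℝ) := by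
        simp [vv]; abel
      rw [this, norm_add_sq_real, norm_smul, inner_smul_right, EuclideanSpace.inner_single_right]
      simp
    have h2 : ‖(X + t • vv d i).2 - Q.2‖ ^ 2 = ‖X.2 - Q.2‖ ^ 2 - 2 * (t * (X.2 - Q.2) i) + t ^ 2 := by
      have : (X + t • vv d i).2 - Q.2 = (X.2 - Q.2) - t • EuclideanSpace.single i (1:ℝ) := by
        simp [vv]; abel
      rw [this, norm_sub_sq_real, norm_smul, inner_smul_right, EuclideanSpace.inner_single_right]
      simp
    unfold GG gau
    rw [h1, h2]
    have h3 : ∀ (c a b a' b' e' : ℝ), a + b = a' + b' + e' →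
        c * Real.exp a * (c * Real.exp b) = c * Real.exp a' * (c * Real.exp b') * Real.exp e' := by
      intro c a b a' b' e' h
      have : Real.exp a * Real.exp b = Real.exp a' * Real.exp b' * Real.exp e' := by
        rw [← Real.exp_add, ← Real.exp_add, ← Real.exp_add, h]
      linear_combination c ^ 2 * this
    apply h3
    simp only [yy, Prod.fst_sub, Prod.snd_sub]
    ring
  simp only [e]
  have h3 : HasDerivAt (fun t : ℝ => -(t * yy d i (X - Q) + t ^ 2) / ε)
      (-(1 * yy d i (X - Q) + 2 * 0) / ε) 0 := by
    have := (((hasDerivAt_id (0:ℝ)).mul_const (yy d i (X - Q))).add (hasDerivAt_pow 2 (0:ℝ))).neg.div_const ε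
    convert! this using 1
    simp
  have h4 := ((h3.exp).const_mul (GG d ε Q X)).ofReal_comp
  convert! h4 using 1
  simp
  ring

theorem psi_deriv (d : ℕ) (ε : ℝ) (hε : 0 < ε) (i : Fin d) (ψ : Eu d × Eu d → ℂ) (hψ : ContDiff ℝ 1 ψ)
    (X : Eu d × Eu d) :
    HasLineDerivAt ℝ ψ ((Complex.I / ε) * Pop d ε i ψ X) X (vv d i) := by
  have h := ((hψ.differentiable one_ne_zero) X).hasFDerivAt.hasLineDerivAt (vv d i)
  convert! h using 1
  have hv : vv d i = (EuclideanSpace.single i 1, (0 : Eu d)) - ((0 : Eu d), EuclideanSpace.single i 1) := by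
    simp [vv]
  have hε' : (ε : ℂ) ≠ 0 := by exact_mod_cast hε.ne'
  rw [hv, map_sub, Pop]
  generalize (fderiv ℝ ψ X) (EuclideanSpace.single i 1, (0 : Eu d)) -
    (fderiv ℝ ψ X) ((0 : Eu d), EuclideanSpace.single i 1) = D
  field_simp
  linear_combination -D * Complex.I_sq

theorem Pop_meas (d : ℕ) (ε : ℝ) (i : Fin d) (ψ : Eu d × Eu d → ℂ) (hψ : ContDiff ℝ 1 ψ) :
    Measurable (Pop d ε i ψ) := by
  apply Continuous.measurable
  have h := hψ.continuous_fderiv one_ne_zero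
  unfold Pop
  fun_prop

theorem cost_P (d : ℕ) (ε : ℝ) (hε : 0 < ε) (i : Fin d) (ψ : Eu d × Eu d → ℂ)
    (hψ : ContDiff ℝ 1 ψ) (h1 : ∫⁻ X, ‖ψ X‖ₑ ^ 2 = 1) :
    ∫⁻ Z : (Eu d × Eu d) × (Eu d × Eu d), ENNReal.ofReal ((Z.1.2 i - Z.2.2 i) ^ 2) *
        (CC d ε * CC d ε * ‖Amp d ε ψ Z‖ₑ ^ 2)
      ≤ (∫⁻ X, ‖Pop d ε i ψ X‖ₑ ^ 2) + ENNReal.ofReal ε := by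
  by_cases hfin : (∫⁻ X, ‖Pop d ε i ψ X‖ₑ ^ 2) = ⊤
  · rw [hfin]; simp
  have hψm : Measurable ψ := hψ.continuous.measurable
  have hPm := Pop_meas d ε i ψ hψ
  have hL : MemLp ψ 2 := memLp2 hψm.aestronglyMeasurable (by rw [h1]; norm_num)
  have hP : MemLp (Pop d ε i ψ) 2 := memLp2 hPm.aestronglyMeasurable hfin
  have hi1 : ∀ Q, Integrable (fun X => (GG d ε Q X : ℂ) * Pop d ε i ψ X) := fun Q =>
    GG_mul_int d ε hε Q _ hP
  have hi2 : ∀ Q, Integrable (fun X => ((yy d i (X - Q) : ℂ) * (GG d ε Q X : ℂ)) * ψ X) := fun Q =>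
    (yG_memLp d ε hε i Q).integrable_mul hL
  have hi : ∀ Q, Integrable (fun X => (GG d ε Q X : ℂ) * (Pop d ε i ψ X +
      (yy d i (X - Q) : ℂ) * (Complex.I * ψ X))) := by
    intro Q
    refine ((hi1 Q).add ((hi2 Q).const_mul Complex.I)).congr (.of_forall fun X => ?_)
    simp only [Pi.add_apply]
    ring
  have hε' : (ε : ℂ) ≠ 0 := by exact_mod_cast hε.ne'
  have := cost_common d ε hε i ψ (Pop d ε i ψ) (fun X => Complex.I * ψ X) hψm hPm (by fun_prop)
    (fun Z => Z.1.2 i - Z.2.2 i) (by fun_prop) hi (fun Q P => by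
      have hO := integrable_osc2 d ε _ (GG_mul_int d ε hε Q ψ hL) P.1 P.2
      have hD : ∀ X, HasLineDerivAt ℝ (fun X => (GG d ε Q X : ℂ) * ψ X)
          ((Complex.I / ε) * ((GG d ε Q X : ℂ) * (Pop d ε i ψ X +
            (yy d i (X - Q) : ℂ) * (Complex.I * ψ X)))) X (vv d i) := by
        intro X
        have A := GG_deriv d ε i Q X
        have B := psi_deriv d ε hε i ψ hψ X
        unfold HasLineDerivAt at A B ⊢
        convert! A.mul B using 1
        simp only [zero_smul, add_zero]
        field_simp
        linear_combination (GG d ε Q X * yy d i (X - Q) * ψ X : ℂ) * Complex.I_sq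
      have IBP := integral_bilinear_hasLineDerivAt_right_eq_neg_left_of_integrable
        (μ := (volume : Measure (Eu d × Eu d))) (B := ContinuousLinearMap.mul ℝ ℂ) (v := vv d i)
        (f := fun X => osc d ε P.1 X.1 * osc d ε P.2 X.2)
        (f' := fun X => -(Complex.I / ε) * ((P.1 i - P.2 i : ℝ) : ℂ) * (osc d ε P.1 X.1 * osc d ε P.2 X.2))
        (g := fun X => (GG d ε Q X : ℂ) * ψ X)
        (g' := fun X => ((Complex.I / ε) * ((GG d ε Q X : ℂ) * (Pop d ε i ψ X +
            (yy d i (X - Q) : ℂ) * (Complex.I * ψ X)))))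
        (by
          refine (hO.const_mul (-(Complex.I / ε) * ((P.1 i - P.2 i : ℝ) : ℂ))).congr (.of_forall fun X => ?_)
          simp only [ContinuousLinearMap.mul_apply']
          ring)
        (by
          refine ((integrable_osc2 d ε _ (hi Q) P.1 P.2).const_mul (Complex.I / ε)).congr (.of_forall fun X => ?_)
          simp only [ContinuousLinearMap.mul_apply']
          ring)
        (by simpa only [ContinuousLinearMap.mul_apply'] using hO)
        (fun X _ => osc_deriv d ε i P X) (fun X _ => hD X)
      simp only [ContinuousLinearMap.mul_apply'] at IBP
      have e1 : ∀ X, osc d ε P.1 X.1 * osc d ε P.2 X.2 * ((Complex.I / ε) * ((GG d ε Q X : ℂ) * (Pop d ε i ψ X +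
            (yy d i (X - Q) : ℂ) * (Complex.I * ψ X)))) =
          (Complex.I / ε) * (osc d ε P.1 X.1 * osc d ε P.2 X.2 * ((GG d ε Q X : ℂ) * (Pop d ε i ψ X +
            (yy d i (X - Q) : ℂ) * (Complex.I * ψ X)))) := fun X => by ring
      have e2 : ∀ X, -(Complex.I / ε) * ((P.1 i - P.2 i : ℝ) : ℂ) * (osc d ε P.1 X.1 * osc d ε P.2 X.2) *
            ((GG d ε Q X : ℂ) * ψ X) = (-(Complex.I / ε) * ((P.1 i - P.2 i : ℝ) : ℂ)) *
            (osc d ε P.1 X.1 * osc d ε P.2 X.2 * ((GG d ε Q X : ℂ) * ψ X)) := fun X => by ring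
      simp_rw [e1, e2] at IBP
      rw [integral_const_mul, integral_const_mul, ← amp_eq_osc d ε ψ] at IBP
      have hne : (Complex.I / ε : ℂ) ≠ 0 := div_ne_zero Complex.I_ne_zero hε'
      apply mul_left_cancel₀ hne
      rw [IBP]
      ring)
  have e3 : ∀ X, ‖Complex.I * ψ X‖ₑ = ‖ψ X‖ₑ := fun X => by
    rw [enorm_mul, ← ofReal_norm Complex.I]; simp
  simpa only [e3, h1, mul_one] using this

theorem cost_eq (d : ℕ) (Z : (Eu d × Eu d) × (Eu d × Eu d)) :
    ENNReal.ofReal (‖Z.1.1 - Z.2.1‖ ^ 2 + ‖Z.1.2 - Z.2.2‖ ^ 2) =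
      ∑ i : Fin d, (ENNReal.ofReal ((Z.1.1 i - Z.2.1 i) ^ 2) + ENNReal.ofReal ((Z.1.2 i - Z.2.2 i) ^ 2)) := by
  rw [EuclideanSpace.real_norm_sq_eq, EuclideanSpace.real_norm_sq_eq, ← Finset.sum_add_distrib,
    ENNReal.ofReal_sum_of_nonneg (fun i _ => by positivity)]
  refine Finset.sum_congr rfl fun i _ => ?_
  rw [ENNReal.ofReal_add (sq_nonneg _) (sq_nonneg _)]
  rfl

theorem cost_n (d : ℕ) (ε : ℝ) (hε : 0 < ε) (ψ : Eu d × Eu d → ℂ)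
    (hψ : ContDiff ℝ 1 ψ) (h1 : ∫⁻ X, ‖ψ X‖ₑ ^ 2 = 1) :
    ∫⁻ Z : (Eu d × Eu d) × (Eu d × Eu d), ENNReal.ofReal (‖Z.1.1 - Z.2.1‖ ^ 2 + ‖Z.1.2 - Z.2.2‖ ^ 2) *
        (CC d ε * CC d ε * ‖Amp d ε ψ Z‖ₑ ^ 2)
      ≤ costForm d ε ψ + ENNReal.ofReal (2 * d * ε) := by
  have hψm : Measurable ψ := hψ.continuous.measurable
  have hA := dens_term_meas d ε ψ hψm
  simp_rw [cost_eq, Finset.sum_mul, add_mul]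
  rw [lintegral_finsetSum _ (fun i _ => by fun_prop)]
  have hc : ENNReal.ofReal (2 * d * ε) = ∑ i : Fin d, (ENNReal.ofReal ε + ENNReal.ofReal ε) := by
    rw [← ENNReal.ofReal_add hε.le hε.le, Finset.sum_const, Finset.card_univ, Fintype.card_fin, nsmul_eq_mul,
      ← ENNReal.ofReal_natCast, ← ENNReal.ofReal_mul (by positivity)]
    congr 1; ring
  rw [hc, costForm, ← Finset.sum_add_distrib]
  refine Finset.sum_le_sum fun i _ => ?_
  rw [lintegral_add_left (by fun_prop)]
  refine (add_le_add (cost_Q d ε hε i ψ hψm h1) (cost_P d ε hε i ψ hψ h1)).trans (le_of_eq ?_)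
  simp only [← enorm_eq_nnnorm]
  ring

theorem cost_total (d : ℕ) (ε : ℝ) (hε : 0 < ε) (lam : ℕ → ℝ) (hl : ∀ n, 0 ≤ lam n) (hs : ∑' n, lam n = 1)
    (ψ : ℕ → Eu d × Eu d → ℂ) (hψ : ∀ n, ContDiff ℝ 1 (ψ n)) (h1 : ∀ n, ∫⁻ X, ‖ψ n X‖ₑ ^ 2 = 1) :
    ∫⁻ z, ENNReal.ofReal (‖z.1.1 - z.2.1‖ ^ 2 + ‖z.1.2 - z.2.2‖ ^ 2)
        ∂((volume : Measure ((Eu d × Eu d) × (Eu d × Eu d))).withDensity (dens d ε lam ψ))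
      ≤ (∑' n, ENNReal.ofReal (lam n) * costForm d ε (ψ n)) + ENNReal.ofReal (2 * d * ε) := by
  have hψm : ∀ n, Measurable (ψ n) := fun n => (hψ n).continuous.measurable
  have sm : Summable lam := by
    by_contra h; rw [tsum_eq_zero_of_not_summable h] at hs; norm_num at hs
  have hs1 : ∑' n, ENNReal.ofReal (lam n) = 1 := by
    rw [← ENNReal.ofReal_tsum_of_nonneg hl sm, hs]; simp
  have hcm : Measurable (fun z : (Eu d × Eu d) × (Eu d × Eu d) =>
      ENNReal.ofReal (‖z.1.1 - z.2.1‖ ^ 2 + ‖z.1.2 - z.2.2‖ ^ 2)) := by fun_prop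
  have hA : ∀ n, Measurable (fun Z => CC d ε * CC d ε * ‖Amp d ε (ψ n) Z‖ₑ ^ 2) :=
    fun n => dens_term_meas d ε (ψ n) (hψm n)
  rw [lintegral_withDensity_eq_lintegral_mul _ (dens_meas d ε lam ψ hψm) hcm]
  have e : ∀ z : (Eu d × Eu d) × (Eu d × Eu d), (dens d ε lam ψ * fun z : (Eu d × Eu d) × (Eu d × Eu d) =>
      ENNReal.ofReal (‖z.1.1 - z.2.1‖ ^ 2 + ‖z.1.2 - z.2.2‖ ^ 2)) z =
      ∑' n, ENNReal.ofReal (lam n) * (ENNReal.ofReal (‖z.1.1 - z.2.1‖ ^ 2 + ‖z.1.2 - z.2.2‖ ^ 2) *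
        (CC d ε * CC d ε * ‖Amp d ε (ψ n) z‖ₑ ^ 2)) := by
    intro z
    rw [Pi.mul_apply, dens, ← ENNReal.tsum_mul_right]
    exact tsum_congr fun n => by ring
  simp_rw [e]
  have hcA : ∀ n, Measurable (fun z : (Eu d × Eu d) × (Eu d × Eu d) =>
      ENNReal.ofReal (‖z.1.1 - z.2.1‖ ^ 2 + ‖z.1.2 - z.2.2‖ ^ 2) *
        (CC d ε * CC d ε * ‖Amp d ε (ψ n) z‖ₑ ^ 2)) := fun n => hcm.mul (hA n)
  rw [lintegral_tsum fun n => ((hcA n).const_mul _).aemeasurable]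
  calc _ ≤ ∑' n, ENNReal.ofReal (lam n) * (costForm d ε (ψ n) + ENNReal.ofReal (2 * d * ε)) := by
        refine ENNReal.tsum_le_tsum fun n => ?_
        rw [lintegral_const_mul _ (hcA n)]
        gcongr
        exact cost_n d ε hε (ψ n) (hψ n) (h1 n)
    _ = _ := by
        simp_rw [mul_add]
        rw [ENNReal.tsum_add, ENNReal.tsum_mul_right, hs1, one_mul]

/-- Theorem 2.3 (2), first inequality: for density operators `ρ₁^ε, ρ₂^ε` on
`L²(ℝ^d)` with Husimi transforms `W̃_ε[ρ₁^ε], W̃_ε[ρ₂^ε]`, one has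
`MK₂^ε(ρ₁^ε,ρ₂^ε)² ≥ dist_{MK,2}(W̃_ε[ρ₁^ε], W̃_ε[ρ₂^ε])² − 2dε`,
stated here in the equivalent subtraction-free form
`dist_{MK,2}(W̃_ε[ρ₁^ε], W̃_ε[ρ₂^ε])² ≤ MK₂^ε(ρ₁^ε,ρ₂^ε)² + 2dε`. -/
theorem husimi_W2_le_MKeps (d : ℕ) (ε : ℝ) (hε : 0 < ε)
    (lam1 lam2 : ℕ → ℝ) (hlam1 : ∀ n, 0 ≤ lam1 n) (hlam2 : ∀ n, 0 ≤ lam2 n)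
    (hsum1 : ∑' n, lam1 n = 1) (hsum2 : ∑' n, lam2 n = 1)
    (φ1 φ2 : ℕ → EuclideanSpace ℝ (Fin d) → ℂ)
    (hm1 : ∀ n, Measurable (φ1 n)) (hm2 : ∀ n, Measurable (φ2 n))
    (horth1 : ∀ m n, ∫ x, conj (φ1 m x) * φ1 n x = if m = n then 1 else 0)
    (horth2 : ∀ m n, ∫ x, conj (φ2 m x) * φ2 n x = if m = n then 1 else 0) :
    W2sq d
        (volume.withDensity fun z => ENNReal.ofReal (husimi d ε lam1 φ1 z))
        (volume.withDensity fun z => ENNReal.ofReal (husimi d ε lam2 φ2 z))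
      ≤ MKsq d ε (densKernel d lam1 φ1) (densKernel d lam2 φ2)
          + ENNReal.ofReal (2 * d * ε) := by
  rw [MKsq, ENNReal.sInf_add]
  refine le_iInf₂ fun c hc => ?_
  obtain ⟨lam, ψ, hl, hs, hC, horth, hk1, hk2, rfl⟩ := hc
  have hψm : ∀ n, Measurable (ψ n) := fun n => (hC n).continuous.measurable
  have h1 : ∀ n, ∫⁻ X, ‖ψ n X‖ₑ ^ 2 = 1 := fun n =>
    lint_of_orth volume (ψ n) (hψm n) (by rw [horth]; simp)
  have hφ1 : ∀ n, ∫⁻ x, ‖φ1 n x‖ₑ ^ 2 ≤ 1 := fun n =>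
    (lint_of_orth volume (φ1 n) (hm1 n) (by rw [horth1]; simp)).le
  have hφ2 : ∀ n, ∫⁻ x, ‖φ2 n x‖ₑ ^ 2 ≤ 1 := fun n =>
    (lint_of_orth volume (φ2 n) (hm2 n) (by rw [horth2]; simp)).le
  have sm : Summable lam := by
    by_contra h; rw [tsum_eq_zero_of_not_summable h] at hs; norm_num at hs
  have hs1 : ∑' n, ENNReal.ofReal (lam n) = 1 := by
    rw [← ENNReal.ofReal_tsum_of_nonneg hl sm, hs]; simp
  have hdm := dens_meas d ε lam ψ hψm
  have hsm : ∀ n, Measurable (fun X : Eu d × Eu d => ψ n X.swap) := fun n => (hψm n).comp measurable_swap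
  have hs2 : ∀ n, ∫⁻ X : Eu d × Eu d, ‖ψ n X.swap‖ₑ ^ 2 ≤ 1 := fun n => by
    rw [lint_swap d (fun X => ‖ψ n X‖ₑ ^ 2), h1]
  refine le_trans (sInf_le ⟨(volume : Measure ((Eu d × Eu d) × (Eu d × Eu d))).withDensity (dens d ε lam ψ),
    ⟨?_⟩, ?_, ?_, rfl⟩) (cost_total d ε hε lam hl hs ψ hC h1)
  · rw [withDensity_apply _ MeasurableSet.univ, Measure.restrict_univ]
    unfold dens
    rw [lintegral_tsum fun n => ((dens_term_meas d ε (ψ n) (hψm n)).const_mul _).aemeasurable]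
    rw [← hs1]
    refine tsum_congr fun n => ?_
    rw [lintegral_const_mul _ (dens_term_meas d ε (ψ n) (hψm n)), total_one d ε hε (ψ n) (hψm n) (h1 n), mul_one]
  · rw [Measure.volume_eq_prod (Eu d × Eu d) (Eu d × Eu d)]
    refine map_fst_wd _ _ _ hdm _ fun z1 => ?_
    rw [dens_fst d ε hε lam ψ hψm (fun n => (h1 n).le)]
    exact (husimi_eq d ε hε lam1 hlam1 hsum1 φ1 hm1 hφ1 lam hl hs ψ hψm (fun n => (h1 n).le) hk1 z1).symm
  · rw [Measure.volume_eq_prod (Eu d × Eu d) (Eu d × Eu d)]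
    refine map_snd_wd _ _ _ hdm _ fun z2 => ?_
    simp_rw [dens_swap d ε lam ψ]
    rw [dens_fst d ε hε lam _ hsm hs2]
    exact (husimi_eq d ε hε lam2 hlam2 hsum2 φ2 hm2 hφ2 lam hl hs _ hsm hs2 hk2 z2).symm

end
end
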